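/- arXiv:2405.14575 — 10 statements merged into one kernel-verified Lean document; each statement's English description precedes it below -/
import Mathlib

section
/- For every number of agents n, every set of m indivisible goods M = {1,…,m}, every additive valuations v_1,…,v_n over goods on M, and every entitlements b_1,…,b_n > 0 with ∑_{i=1}^n b_i = 1, there exists an allocation (S_1,…,S_n) of M such that v_i(S_i) ≥ (1/2)·MMS(v_i, b̂_i) for every agent i. In other words, the share (1/2)·MMS-hat, defined by (v,b) ↦ (1/2)·MMS(v, b̂), is feasible ex-post for additive valuations over goods and arbitrary entitlements. -/
/-!
The allocation is produced by an auction. Rescale every valuation so that the maximin share of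
agent `i` is `2` and the agent needs value `x = 1`. Items are sold one after another; the agent
with the highest bid picks an item and pays the bid out of the game. The `t`-th auction counts for
an agent as an item of that agent's own `t`-th largest value `w`, since an item at least that good
is still unsold when the agent picks.

For a decreasing list `l` of values still to come, `bidR l x` is the largest total budget `R` of
the opponents, relative to an own budget `1`, against which the need `x` can be met: a bid `p` wins
and leaves the ratio `R / (1 - p)` with need `x - w`, or loses and leaves the ratio `R - p` with
need `x`, and equating these to `bidR l (x - w)` and `bidR l x` gives the recursion. The
corresponding share of the total budget is `minBudget l x = 1 / (1 + bidR l x)`, and as long as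
these shares sum to less than `1` a winner can be chosen so that this remains true
(`exists_winner`). Hence needs with total share less than `1` can all be met (`exists_assignment`).

It remains to show `k ≤ bidR l 1` when the items can be split into `k` bundles of value at least
`2` (`le_bidR_sortedVals`): with `k = ⌊1 / b⌋` the share is then at most `1 / (k + 1) < b`, and the
entitlements sum to `1`. An item of value at least `1` adds `1` to `bidR` and spoils at most one
bundle, so it is enough to treat items smaller than `1` of total value at least `2 k`
(`le_bidR_one_of_lt_one`). This goes by induction on `k`. The case `k = 1` is the duality
`bidR l x * bidR l y ≥ 1` for `x + y ≤ l.sum` (`bidR_mul_bidR`). For the step from `k` to `k + 1`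
let `a ≥ b` be the two largest items. If `a + b ≤ 1 + k / (k + 1)`, the estimate
`bidR l x ≥ (l.sum - x) / (x + c)` with `c = k / (k + 1)` suffices (`linear_bound_first`).
Otherwise `a` and `b` nearly meet the need on their own: once one of them is won the remaining
need is small, and losing both leaves total value at least `2 k`; `bidR_two_large` and
`bidR_special` evaluate the recursion in these cases.
-/

open Finset

noncomputable section

/-- Value of a bundle under an additive valuation. -/
def bundleVal {m : ℕ} (v : Fin m → ℝ) (S : Finset (Fin m)) : ℝ := ∑ j ∈ S, v j

/-- A tuple of bundles partitions the items: pairwise disjoint and covering all items. -/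
def IsPartition {n m : ℕ} (A : Fin n → Finset (Fin m)) : Prop :=
  (∀ i j : Fin n, i ≠ j → Disjoint (A i) (A j)) ∧ ∀ e : Fin m, ∃ i, e ∈ A i

/-- Maximin share `MMS(v, 1/k)` for an additive valuation over goods:
the maximum over partitions into `k` bundles of the minimum bundle value. -/
def MMSg {m : ℕ} (v : Fin m → ℝ) (k : ℕ) : ℝ :=
  ⨆ P : {P : Fin k → Finset (Fin m) // IsPartition P}, ⨅ j : Fin k, bundleVal v (P.1 j)

/-! ### The bidding threshold -/

/-- The largest total budget of the opponents, relative to an own budget of `1`, against which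
a bidder can win value `x` when items of value `w` for `w ∈ l` are auctioned in this order and
winning bids leave the game. If `w` alone meets the need `x`, bidding everything either wins or
removes `1` from the opponents; otherwise the optimal bid makes winning and losing equally good.
The value at a need `x ≤ 0` has no meaning. -/
def bidR : List ℝ → ℝ → ℝ
  | [], _ => 0
  | w :: l, x => if x ≤ w then 1 + bidR l x
      else (1 + bidR l x) * bidR l (x - w) / (1 + bidR l (x - w))

theorem bidR_nonneg (l : List ℝ) : ∀ x, 0 ≤ bidR l x := by
  induction l with
  | nil => intro x; simp [bidR]
  | cons w l ih =>
    intro x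
    have h1 := ih x
    have h2 := ih (x - w)
    rw [bidR]
    split_ifs <;> positivity

theorem bidR_cons_of_le {w x : ℝ} (l : List ℝ) (h : x ≤ w) :
    bidR (w :: l) x = 1 + bidR l x := by
  rw [bidR, if_pos h]

theorem bidR_cons_of_lt {w x : ℝ} (l : List ℝ) (h : w < x) :
    bidR (w :: l) x = (1 + bidR l x) * bidR l (x - w) / (1 + bidR l (x - w)) := by
  rw [bidR, if_neg (not_le.mpr h)]

theorem bid_step_mono {a b a' b' : ℝ} (ha : 0 ≤ a) (hb : 0 ≤ b) (haa : a ≤ a') (hbb : b ≤ b') :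
    (1 + a) * b / (1 + b) ≤ (1 + a') * b' / (1 + b') := by
  rw [div_le_div_iff₀ (by linarith) (by linarith)]
  have h1 : b * (1 + b') ≤ b' * (1 + b) := by nlinarith
  have h2 : 0 ≤ b' * (1 + b) := by
    have : 0 ≤ b' := hb.trans hbb
    positivity
  nlinarith

theorem le_bidR_cons {w x a b : ℝ} {l : List ℝ} (h : w < x) (ha : 0 ≤ a) (hb : 0 ≤ b)
    (hal : a ≤ bidR l x) (hbl : b ≤ bidR l (x - w)) :
    (1 + a) * b / (1 + b) ≤ bidR (w :: l) x := by
  rw [bidR_cons_of_lt l h]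
  exact bid_step_mono ha hb hal hbl

theorem bidR_antitone (l : List ℝ) : ∀ {x y : ℝ}, x ≤ y → bidR l y ≤ bidR l x := by
  induction l with
  | nil => intro x y _; simp [bidR]
  | cons w l ih =>
    intro x y hxy
    rcases le_or_gt y w with hy | hy
    · rw [bidR_cons_of_le l hy, bidR_cons_of_le l (hxy.trans hy)]
      linarith [ih hxy]
    · rcases le_or_gt x w with hx | hx
      · rw [bidR_cons_of_lt l hy, bidR_cons_of_le l hx]
        have h1 := bidR_nonneg l y
        have h2 := bidR_nonneg l (y - w)
        rw [div_le_iff₀ (by linarith)]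
        nlinarith [ih hxy]
      · rw [bidR_cons_of_lt l hx]
        exact bid_step_mono (bidR_nonneg _ _) (bidR_nonneg _ _) (ih hxy)
          (ih (by linarith)) |>.trans' (bidR_cons_of_lt l hy).le

/-- Duality: two needs which together do not exceed the total value have thresholds with product
at least `1`, as if one of two opposing bidders had to succeed. -/
theorem bidR_mul_bidR (l : List ℝ) : ∀ {x y : ℝ}, 0 < x → 0 < y → x + y ≤ l.sum →
    1 ≤ bidR l x * bidR l y := by
  induction l with
  | nil => intro x y hx hy h; simp at h; linarith
  | cons w l ih =>
    have key : ∀ a b : ℝ, 0 ≤ b → 1 ≤ a * b → 1 ≤ (1 + a) * (b / (1 + b)) := by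
      intro a b hb hab
      rw [← mul_div_assoc, le_div_iff₀ (by linarith)]
      linarith
    have mixed : ∀ {x y : ℝ}, 0 < x → w < y → x ≤ w → x + y ≤ w + l.sum →
        1 ≤ bidR (w :: l) x * bidR (w :: l) y := by
      intro x y hx hy hxw h
      rw [bidR_cons_of_le l hxw, bidR_cons_of_lt l hy, mul_div_assoc]
      have h1 := key _ _ (bidR_nonneg l (y - w)) (ih (x := x) (y := y - w) hx (by linarith)
        (by linarith))
      have h2 := bidR_nonneg l y
      nlinarith
    intro x y hx hy h
    rw [List.sum_cons] at h
    rcases le_or_gt x w with hxw | hxw <;> rcases le_or_gt y w with hyw | hyw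
    · rw [bidR_cons_of_le l hxw, bidR_cons_of_le l hyw]
      nlinarith [bidR_nonneg l x, bidR_nonneg l y, mul_nonneg (bidR_nonneg l x) (bidR_nonneg l y)]
    · exact mixed hx hyw hxw h
    · rw [mul_comm]
      exact mixed hy hxw hyw (by linarith)
    · rw [bidR_cons_of_lt l hxw, bidR_cons_of_lt l hyw, mul_div_assoc, mul_div_assoc]
      have h1 := key _ _ (bidR_nonneg l (y - w)) (ih (x := x) (y := y - w) hx (by linarith)
        (by linarith))
      have h2 := key _ _ (bidR_nonneg l (x - w)) (ih (x := y) (y := x - w) hy (by linarith)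
        (by linarith))
      calc (1 : ℝ) ≤ ((1 + bidR l x) * (bidR l (y - w) / (1 + bidR l (y - w)))) *
            ((1 + bidR l y) * (bidR l (x - w) / (1 + bidR l (x - w)))) := by nlinarith
        _ = _ := by ring

theorem one_le_bidR {l : List ℝ} {x : ℝ} (hx : 0 < x) (h : 2 * x ≤ l.sum) : 1 ≤ bidR l x := by
  have h1 := bidR_mul_bidR l hx hx (by linarith)
  nlinarith [bidR_nonneg l x]

/-! ### Linear lower bounds on the threshold -/

/-- The estimate `(T - x) / (x + c)`, where `T` is the total value, is stable under the recursion: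
if `1 + bidR l x ≥ (T + c) / (x + c)` and `1 + bidR l (x - w) ≥ (T + c) / (x - w + c)`, then the
same holds for `w :: l`, with total `w + T`. -/
theorem linear_step {T x c w : ℝ} {l : List ℝ} (hw : 0 ≤ w) (hwx : w < x) (hc : 0 ≤ c)
    (h1 : (T - x) / (x + c) ≤ bidR l x) (h2 : (T - (x - w)) / (x - w + c) ≤ bidR l (x - w)) :
    (w + T - x) / (x + c) ≤ bidR (w :: l) x := by
  have hR := bidR_nonneg l x
  have hRn := bidR_nonneg l (x - w)
  rw [bidR_cons_of_lt l hwx]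
  have p1 : 0 < x + c := by linarith
  have p2 : 0 < x - w + c := by linarith
  rw [div_le_iff₀ p1] at h1
  rw [div_le_iff₀ p2] at h2
  rw [div_le_div_iff₀ p1 (by linarith)]
  -- `(1 + R) (x + c) ≥ T + c` and `(1 + Rn) (x - w + c) ≥ T + c`
  nlinarith [mul_le_mul_of_nonneg_right h1 hRn]

/-- The linear estimate when all items are at most `c`. -/
theorem linear_bound (l : List ℝ) : ∀ {x c : ℝ}, 0 < x → 0 ≤ c → (∀ w ∈ l, 0 ≤ w ∧ w ≤ c) →
    (l.sum - x) / (x + c) ≤ bidR l x := by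
  induction l with
  | nil =>
    intro x c hx hc _
    simp only [List.sum_nil, bidR]
    exact div_nonpos_of_nonpos_of_nonneg (by linarith) (by linarith)
  | cons w l ih =>
    intro x c hx hc hl
    have hw := hl w (by simp)
    have hl' : ∀ u ∈ l, 0 ≤ u ∧ u ≤ c := fun u hu => hl u (by simp [hu])
    rw [List.sum_cons]
    rcases le_or_gt x w with h | h
    · rw [bidR_cons_of_le l h]
      have := ih hx hc hl'
      rw [div_le_iff₀ (by linarith)] at this ⊢
      linarith
    · exact linear_step hw.1 h hc (ih hx hc hl') (ih (by linarith) hc hl')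

/-- The linear estimate allowing items larger than `c`, provided they are at most `x + c` and
`1 - x`. This is the situation after the first item won, when the need has dropped to
`x = 1 - w` and the later items are at most `w`. -/
theorem linear_bound_second (l : List ℝ) : ∀ {x c : ℝ}, 0 < x → 1 / 2 ≤ c →
    l.Pairwise (· ≥ ·) → (∀ w ∈ l, 0 ≤ w ∧ w ≤ x + c ∧ w ≤ 1 - x) →
    (l.sum - x) / (x + c) ≤ bidR l x := by
  induction l with
  | nil => intro x c hx hc _ _; exact linear_bound [] hx (by linarith) (by simp)
  | cons w l ih =>
    intro x c hx hc hs hl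
    have hw := hl w (by simp)
    rw [List.pairwise_cons] at hs
    rw [List.sum_cons]
    rcases le_or_gt x w with h | h
    · rw [bidR_cons_of_le l h]
      have := ih hx hc hs.2 (fun u hu => hl u (by simp [hu]))
      rw [div_le_iff₀ (by linarith)] at this ⊢
      linarith
    · -- `w < x` and `w ≤ 1 - x` give `w < 1/2 ≤ c`
      have hl' : ∀ u ∈ l, 0 ≤ u ∧ u ≤ c := fun u hu =>
        ⟨(hl u (by simp [hu])).1, by linarith [hs.1 u hu]⟩
      exact linear_step hw.1 h (by linarith) (linear_bound l hx (by linarith) hl')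
        (linear_bound l (by linarith) (by linarith) hl')

/-- The linear estimate at need `1` when any two items sum to at most `1 + c`. -/
theorem linear_bound_first (l : List ℝ) {c : ℝ} (hc : 1 / 2 ≤ c) (hs : l.Pairwise (· ≥ ·))
    (hl : ∀ w ∈ l, 0 ≤ w ∧ w < 1) (hp : l.Pairwise (fun a b => a + b ≤ 1 + c)) :
    (l.sum - 1) / (1 + c) ≤ bidR l 1 := by
  induction l with
  | nil => exact linear_bound [] one_pos (by linarith) (by simp)
  | cons w l ih =>
    rw [List.pairwise_cons] at hs hp
    have hw := hl w (by simp)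
    have hl' : ∀ u ∈ l, 0 ≤ u ∧ u < 1 := fun u hu => hl u (by simp [hu])
    rw [List.sum_cons]
    refine linear_step hw.1 hw.2 (by linarith) (ih hs.2 hl' hp.2) ?_
    refine linear_bound_second l (by linarith) hc hs.2 fun u hu => ⟨(hl' u hu).1, ?_, ?_⟩
    · linarith [hp.1 u hu]
    · linarith [hs.1 u hu]

/-- Each of the `q` items of value at least `x` adds `1` to the threshold, and the linear estimate
with `c = x` applies to the rest, of total value `S`. -/
theorem count_bound (l : List ℝ) {x B : ℝ} (hx : 0 < x) (hs : l.Pairwise (· ≥ ·))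
    (hl : ∀ w ∈ l, 0 ≤ w ∧ w ≤ B) :
    ∃ (q : ℕ) (S : ℝ), l.sum ≤ q * B + S ∧ (q : ℝ) ≤ bidR l x ∧
      q + (S - x) / (2 * x) ≤ bidR l x := by
  induction l with
  | nil =>
    refine ⟨0, 0, by simp, by simp [bidR], ?_⟩
    have : (0 - x) / (2 * x) ≤ 0 :=
      div_nonpos_of_nonpos_of_nonneg (by linarith) (by linarith)
    simpa [bidR] using this
  | cons w l ih =>
    have hl' : ∀ u ∈ l, 0 ≤ u ∧ u ≤ B := fun u hu => hl u (by simp [hu])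
    have hw := hl w (by simp)
    rcases le_or_gt x w with h | h
    · rw [List.pairwise_cons] at hs
      obtain ⟨q, S, h1, h2, h3⟩ := ih hs.2 hl'
      refine ⟨q + 1, S, ?_, ?_, ?_⟩
      · rw [List.sum_cons]; push_cast; linarith
      · rw [bidR_cons_of_le l h]; push_cast; linarith
      · rw [bidR_cons_of_le l h]; push_cast; linarith
    · refine ⟨0, (w :: l).sum, by simp, by simpa using bidR_nonneg _ _, ?_⟩
      have := linear_bound (w :: l) hx hx.le (fun u hu => ⟨(hl u hu).1, ?_⟩)
      · rw [two_mul]; simpa using this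
      · rcases List.mem_cons.mp hu with rfl | hu
        · exact h.le
        · exact ((List.pairwise_cons.mp hs).1 u hu).trans h.le

/-! ### Items smaller than the need -/

/-- Induction step from `k` to `k + 1` when the two largest items are both at least `2 / 3`. -/
theorem bidR_two_large {k : ℕ} (hk : 1 ≤ k) {a b : ℝ} {l : List ℝ}
    (hs : (a :: b :: l).Pairwise (· ≥ ·)) (hl : ∀ w ∈ a :: b :: l, 0 ≤ w ∧ w < 1)
    (hsum : 2 * ((k : ℝ) + 1) ≤ (a :: b :: l).sum) (hb : 2 / 3 ≤ b)
    (ih : (k : ℝ) ≤ bidR l 1) : (k : ℝ) + 1 ≤ bidR (a :: b :: l) 1 := by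
  have hk' : (1 : ℝ) ≤ k := by exact_mod_cast hk
  have ha1 := (hl a (by simp)).2
  have hb1 := (hl b (by simp)).2
  simp only [List.pairwise_cons] at hs
  have hab : b ≤ a := hs.1 b (by simp)
  simp only [List.sum_cons] at hsum
  have r2 : 2 * (k : ℝ) + 1 ≤ bidR l (1 - b) := by
    obtain ⟨q, S, h1, h2, h3⟩ := count_bound l (x := 1 - b) (B := b) (by linarith) hs.2.2
      (fun w hw => ⟨(hl w (by simp [hw])).1, hs.2.1 w hw⟩)
    rcases le_or_gt (2 * k + 1) q with hq | hq
    · have : (2 * (k : ℝ) + 1) ≤ q := by exact_mod_cast hq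
      linarith
    · have hq' : (q : ℝ) ≤ 2 * k := by exact_mod_cast Nat.lt_succ_iff.mp hq
      refine le_trans ?_ h3
      have : 2 * (k : ℝ) + 1 - q ≤ (S - (1 - b)) / (2 * (1 - b)) := by
        rw [le_div_iff₀ (by linarith)]
        nlinarith [mul_nonneg (sub_nonneg.mpr hq') (sub_nonneg.mpr hb),
          mul_nonneg (sub_nonneg.mpr hk') (sub_nonneg.mpr hb1.le)]
      linarith
  have r1 : 2 * ((k : ℝ) + 1) ≤ bidR (b :: l) (1 - a) := by
    rw [bidR_cons_of_le l (by linarith)]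
    have := bidR_antitone l (x := 1 - a) (y := 1 - b) (by linarith)
    linarith
  have h1 := le_bidR_cons hb1 (by positivity) (by positivity) ih r2
  have e1 : (1 + (k : ℝ)) * (2 * k + 1) / (1 + (2 * k + 1)) = k + 1 / 2 := by field_simp; ring
  rw [e1] at h1
  have h2 := le_bidR_cons ha1 (by positivity) (by positivity) h1 r1
  have e2 : (1 + ((k : ℝ) + 1 / 2)) * (2 * (k + 1)) / (1 + 2 * (k + 1)) = k + 1 := by
    field_simp; ring
  rwa [e2] at h2

/-- The step from `k = 1` to `k = 2` when the second largest item is below `2 / 3` but the two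
largest items sum to more than `3 / 2`. Apart from `a` and `b`, the distinction is by the number of
further items, none, one or at least two, of value at least `1 - b`. -/
theorem bidR_special {a b : ℝ} {l : List ℝ}
    (hs : (a :: b :: l).Pairwise (· ≥ ·)) (hl : ∀ w ∈ a :: b :: l, 0 ≤ w ∧ w < 1)
    (hsum : 4 ≤ (a :: b :: l).sum) (hb : b < 2 / 3) (hab : 3 / 2 < a + b) :
    2 ≤ bidR (a :: b :: l) 1 := by
  have ha1 := (hl a (by simp)).2
  have hb1 := (hl b (by simp)).2
  simp only [List.pairwise_cons] at hs
  simp only [List.sum_cons] at hsum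
  have hR : 1 ≤ bidR l 1 := one_le_bidR one_pos (by linarith)
  have hRn : bidR (b :: l) (1 - a) = 1 + bidR l (1 - a) := bidR_cons_of_le l (by linarith)
  have hanti := bidR_antitone l (x := 1 - a) (y := 1 - b) (by linarith)
  -- lower bounds `p`, `r` on the two thresholds after winning `b` resp. `a` propagate to `t`
  have main : ∀ p r s t : ℝ, 0 ≤ p → 0 ≤ r → 0 ≤ s → p ≤ bidR l (1 - b) →
      r ≤ 1 + bidR l (1 - a) → s = (1 + 1) * p / (1 + p) → t = (1 + s) * r / (1 + r) →
      t ≤ bidR (a :: b :: l) 1 := by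
    intro p r s t hp hr hs0 h1 h2 h3 h4
    have g1 := le_bidR_cons hb1 zero_le_one hp hR h1
    rw [← h3] at g1
    rw [← hRn] at h2
    have g2 := le_bidR_cons ha1 hs0 hr g1 h2
    rwa [← h4] at g2
  have hpos : 0 < 1 - a := by linarith
  cases l with
  | nil => simp at hsum; linarith
  | cons c l =>
    have hc := hl c (by simp)
    have hcb : c ≤ b := hs.2.1 c (by simp)
    have hs' := hs.2.2
    rw [List.pairwise_cons] at hs'
    rw [List.sum_cons] at hsum
    rcases le_or_gt (1 - b) c with hcb' | hcb'
    · rw [bidR_cons_of_le l hcb'] at hanti main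
      rw [bidR_cons_of_le l (show 1 - a ≤ c by linarith)] at hanti main
      cases l with
      | nil => simp at hsum; linarith
      | cons d l =>
        have hd := hl d (by simp)
        have hdc : d ≤ c := hs'.1 d (by simp)
        rcases le_or_gt (1 - b) d with hd' | hd'
        · rw [bidR_cons_of_le l hd'] at hanti main
          rw [bidR_cons_of_le l (show 1 - a ≤ d by linarith)] at hanti main
          rw [List.sum_cons] at hsum
          have h1 : 1 ≤ bidR l (1 - b) := one_le_bidR (by linarith) (by linarith)
          exact main 3 4 (3 / 2) 2 (by norm_num) (by norm_num) (by norm_num) (by linarith)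
            (by linarith) (by norm_num) (by norm_num)
        · have hsm : ∀ w ∈ d :: l, 0 ≤ w ∧ w ≤ 1 - b := by
            intro w hw
            refine ⟨(hl w (by simp [List.mem_cons.mp hw])).1, ?_⟩
            rcases List.mem_cons.mp hw with rfl | hw
            · exact hd'.le
            · exact ((List.pairwise_cons.mp hs'.2).1 w hw).trans hd'.le
          have h1 := linear_bound (d :: l) (x := 1 - b) (by linarith) (by linarith) hsm
          have h1' : 3 / 2 ≤ bidR (d :: l) (1 - b) := by
            refine le_trans ?_ h1
            rw [le_div_iff₀ (by linarith)]
            linarith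
          have h2 : 8 / 3 ≤ bidR (d :: l) (1 - a) := by
            obtain ⟨q, S, g1, g2, g3⟩ := count_bound (d :: l) hpos hs'.2 hsm
            rcases le_or_gt 3 q with hq | hq
            · have : (3 : ℝ) ≤ q := by exact_mod_cast hq
              linarith
            · have hq' : (q : ℝ) ≤ 2 := by exact_mod_cast Nat.lt_succ_iff.mp hq
              have : 3 ≤ (S - (1 - a)) / (2 * (1 - a)) := by
                rw [le_div_iff₀ (by linarith)]
                nlinarith
              have := Nat.cast_nonneg (α := ℝ) q
              linarith
          exact main (5 / 2) (14 / 3) (10 / 7) 2 (by norm_num) (by norm_num) (by norm_num)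
            (by linarith) (by linarith) (by norm_num) (by norm_num)
    · have hsm : ∀ w ∈ c :: l, 0 ≤ w ∧ w ≤ 1 - b := by
        intro w hw
        refine ⟨(hl w (by simp [List.mem_cons.mp hw])).1, ?_⟩
        rcases List.mem_cons.mp hw with rfl | hw
        · exact hcb'.le
        · exact (hs'.1 w hw).trans hcb'.le
      have h1 := linear_bound (c :: l) (x := 1 - b) (by linarith) (by linarith) hsm
      rw [List.sum_cons] at h1
      have h1' : 2 ≤ bidR (c :: l) (1 - b) := by
        refine le_trans ?_ h1
        rw [le_div_iff₀ (by linarith)]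
        linarith
      have h2 : 5 ≤ bidR (c :: l) (1 - a) := by
        obtain ⟨q, S, g1, g2, g3⟩ := count_bound (c :: l) hpos hs.2.2 hsm
        rw [List.sum_cons] at g1
        rcases le_or_gt 5 q with hq | hq
        · have : (5 : ℝ) ≤ q := by exact_mod_cast hq
          linarith
        · have hq' : (q : ℝ) ≤ 4 := by exact_mod_cast Nat.lt_succ_iff.mp hq
          have hq0 := Nat.cast_nonneg (α := ℝ) q
          have hq1 : (q : ℝ) * (1 - b) ≤ q * (1 / 2) := by gcongr; linarith
          have : 5 - q / 2 + 2 ≤ (S - (1 - a)) / (2 * (1 - a)) + q := by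
            have : 6 - 3 / 2 * (q : ℝ) + 3 / 2 - 1/2 ≤ (S - (1 - a)) / (2 * (1 - a)) := by
              rw [le_div_iff₀ (by linarith)]
              nlinarith
            linarith
          linarith
      exact main 2 6 (4 / 3) 2 (by norm_num) (by norm_num) (by norm_num)
        (by linarith) (by linarith) (by norm_num) (by norm_num)

/-- Items smaller than `1` with total value at least `2 k` yield a threshold of at least `k`. -/
theorem le_bidR_one_of_lt_one {k : ℕ} (hk : 1 ≤ k) : ∀ {l : List ℝ}, l.Pairwise (· ≥ ·) →
    (∀ w ∈ l, 0 ≤ w ∧ w < 1) → 2 * (k : ℝ) ≤ l.sum → (k : ℝ) ≤ bidR l 1 := by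
  induction k, hk using Nat.le_induction with
  | base =>
    intro l _ _ h
    have := one_le_bidR (l := l) one_pos (by simpa using h)
    simpa using this
  | succ k hk ih =>
    intro l hs hl h
    have hk' : (1 : ℝ) ≤ k := by exact_mod_cast hk
    push_cast at h ⊢
    match l, hs, hl, h with
    | [], _, _, h => simp at h; linarith
    | [w], _, hl, h =>
      have := (hl w (by simp)).2
      simp at h; linarith
    | a :: b :: l, hs, hl, h =>
      have ha1 := (hl a (by simp)).2
      have hb1 := (hl b (by simp)).2
      have hs0 := hs
      simp only [List.pairwise_cons] at hs
      have hab : b ≤ a := hs.1 b (by simp)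
      have hθ : (1 : ℝ) / 2 ≤ k / (k + 1) := by
        rw [div_le_div_iff₀ (by norm_num) (by linarith)]; linarith
      rcases le_or_gt (a + b) (1 + (k : ℝ) / (k + 1)) with hp | hp
      · have hlin := linear_bound_first (a :: b :: l) hθ hs0 hl (by
          have hbl := hs.2.1
          simp only [List.pairwise_cons]
          refine ⟨fun u hu => ?_, fun u hu => ?_, hs.2.2.imp_of_mem fun {u w} hu hw _ => ?_⟩
          · rcases List.mem_cons.mp hu with rfl | hu
            · exact hp
            · linarith [hbl u hu]
          · linarith [hbl u hu]
          · linarith [hbl u hu, hbl w hw])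
        refine le_trans ?_ hlin
        rw [le_div_iff₀ (by positivity)]
        have : ((k : ℝ) + 1) * (1 + k / (k + 1)) = 2 * k + 1 := by field_simp; ring
        linarith
      · rcases le_or_gt (2 / 3) b with hb | hb
        · refine bidR_two_large hk hs0 hl h hb (ih hs.2.2 (fun w hw => hl w (by simp [hw])) ?_)
          simp only [List.sum_cons] at h
          linarith
        · have hk2 : (k : ℝ) < 2 := by
            have : (k : ℝ) / (k + 1) < 2 / 3 := by linarith
            rw [div_lt_div_iff₀ (by linarith) (by norm_num)] at this
            linarith
          have hk1 : k = 1 := by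
            have : k < 2 := by exact_mod_cast hk2
            omega
          subst hk1
          norm_num at h hp ⊢
          exact bidR_special hs0 hl (by simp only [List.sum_cons]; linarith) hb (by linarith)

/-- Counting every item of value at least `1` as `2`, a total of `2 k` gives threshold `k`. -/
theorem le_bidR_one (l : List ℝ) : ∀ (k : ℕ), l.Pairwise (· ≥ ·) → (∀ w ∈ l, 0 ≤ w) →
    2 * (k : ℝ) ≤ 2 * (l.countP (1 ≤ ·) : ℕ) + (l.filter (· < 1)).sum → (k : ℝ) ≤ bidR l 1 := by
  induction l with
  | nil =>
    intro k _ _ h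
    simp only [List.countP_nil, List.filter_nil, List.sum_nil] at h
    simp only [bidR]
    push_cast at h
    linarith
  | cons w l ih =>
    intro k hs hl h
    rcases k with _ | k
    · simpa using bidR_nonneg _ _
    rcases le_or_gt 1 w with hw | hw
    · rw [bidR_cons_of_le l hw]
      have := ih k (List.pairwise_cons.mp hs).2 (fun u hu => hl u (by simp [hu])) (by
        rw [List.countP_cons_of_pos (by simpa using hw),
          List.filter_cons_of_neg (by simpa using hw)] at h
        push_cast at h
        linarith)
      push_cast
      linarith
    · have hlt : ∀ u ∈ w :: l, u < 1 := by
        intro u hu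
        rcases List.mem_cons.mp hu with rfl | hu
        · exact hw
        · exact ((List.pairwise_cons.mp hs).1 u hu).trans_lt hw
      rw [List.countP_eq_zero.mpr (by simpa using hlt),
        List.filter_eq_self.mpr (by simpa using hlt)] at h
      exact le_bidR_one_of_lt_one (by omega) hs (fun u hu => ⟨hl u hu, hlt u hu⟩)
        (by simpa using h)

/-! ### The auction -/

/-- The share of the total budget that just suffices for the need `x`: `1 / (1 + bidR l x)`, and
`0` when nothing more is needed. -/
def minBudget (l : List ℝ) (x : ℝ) : ℝ := if x ≤ 0 then 0 else 1 / (1 + bidR l x)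

/-- Effect of winning `w`. If `s` is the factor by which the total budget shrinks when an agent
wins at the optimal bid, the winner keeps `minBudget - (1 - 1 / s)`, renormalized by `s`. -/
theorem minBudget_cons_win (w : ℝ) (l : List ℝ) {x : ℝ} (hx : 0 < x) :
    minBudget l (x - w) =
      (1 + bidR (w :: l) x) / (1 + bidR l x) * (minBudget (w :: l) x - 1) + 1 := by
  have h0 := bidR_nonneg l x
  have h1 := bidR_nonneg (w :: l) x
  have h2 := bidR_nonneg l (x - w)
  rw [minBudget, minBudget, if_neg (not_le.mpr hx)]
  rcases le_or_gt x w with h | h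
  · rw [if_pos (by linarith), bidR_cons_of_le l h]
    field_simp
    ring
  · rw [if_neg (by linarith)]
    have e : bidR (w :: l) x * (1 + bidR l (x - w)) = (1 + bidR l x) * bidR l (x - w) := by
      rw [bidR_cons_of_lt l h]
      field_simp
    field_simp
    linarith

/-- Effect of losing `w` against a bid equal to the own optimal one: the share is renormalized by
the same factor as in `minBudget_cons_win`. -/
theorem minBudget_cons_lose (w : ℝ) (l : List ℝ) {x : ℝ} (hx : 0 < x) :
    minBudget l x = (1 + bidR (w :: l) x) / (1 + bidR l x) * minBudget (w :: l) x := by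
  have h0 := bidR_nonneg l x
  have h1 := bidR_nonneg (w :: l) x
  rw [minBudget, minBudget, if_neg (not_le.mpr hx), if_neg (not_le.mpr hx)]
  field_simp

/-- If the required shares sum to less than `1`, then some agent can win the current item so that
the new required shares again do. The winner is the highest bidder, that is, an agent maximizing
the renormalization factor. -/
theorem exists_winner {n : ℕ} (w x : Fin n → ℝ) (l : Fin n → List ℝ)
    (hφ : ∑ i, minBudget (w i :: l i) (x i) < 1) (hx : ∃ i, 0 < x i) :
    ∃ i, ∑ j, minBudget (l j) (Function.update x i (x i - w i) j) < 1 := by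
  obtain ⟨i0, hi0⟩ := hx
  obtain ⟨i, hi, hmax⟩ := (univ.filter fun i => 0 < x i).exists_max_image
    (fun j => (1 + bidR (w j :: l j) (x j)) / (1 + bidR (l j) (x j))) ⟨i0, by simpa using hi0⟩
  have hxi : 0 < x i := by simpa using hi
  refine ⟨i, ?_⟩
  set s := (1 + bidR (w i :: l i) (x i)) / (1 + bidR (l i) (x i)) with hs
  have hs0 : 0 < s := by
    have h0 := bidR_nonneg (l i) (x i)
    have h1 := bidR_nonneg (w i :: l i) (x i)
    positivity
  rw [← add_sum_erase univ _ (mem_univ i), Function.update_self]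
  rw [← add_sum_erase univ _ (mem_univ i)] at hφ
  rw [minBudget_cons_win _ _ hxi, ← hs]
  have hle : ∑ j ∈ univ.erase i, minBudget (l j) (Function.update x i (x i - w i) j) ≤
      s * ∑ j ∈ univ.erase i, minBudget (w j :: l j) (x j) := by
    rw [mul_sum]
    refine sum_le_sum fun j hj => ?_
    rw [Function.update_of_ne (ne_of_mem_erase hj)]
    rcases le_or_gt (x j) 0 with h | h
    · simp [minBudget, h]
    · rw [minBudget_cons_lose (w j) (l j) h]
      refine mul_le_mul_of_nonneg_right (hmax j (by simpa using h)) ?_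
      have h1 := bidR_nonneg (w j :: l j) (x j)
      rw [minBudget, if_neg (not_le.mpr h)]
      positivity
  nlinarith

/-- Agents whose required shares sum to less than `1` can all be satisfied. The list `l i` is a
decreasing list of virtual values, dominated by the values `v i e` of the unsold items `e ∈ M` in
the sense that for every `τ` it has at most as many entries `≥ τ`; this survives the sale of an
arbitrary item and the removal of the head of `l i`. -/
theorem exists_assignment {α : Type*} [DecidableEq α] {n : ℕ} [Nonempty (Fin n)]
    (v : Fin n → α → ℝ) (hv : ∀ i e, 0 ≤ v i e) : ∀ (N : ℕ) (M : Finset α) (l : Fin n → List ℝ)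
    (x : Fin n → ℝ), (∀ i, (l i).length = N) → (∀ i, (l i).Pairwise (· ≥ ·)) →
    (∀ i τ, (l i).countP (τ ≤ ·) ≤ #{e ∈ M | τ ≤ v i e}) →
    ∑ i, minBudget (l i) (x i) < 1 →
    ∃ f : α → Fin n, ∀ i, x i ≤ ∑ e ∈ M with f e = i, v i e := by
  intro N
  have triv : ∀ (M : Finset α) (x : Fin n → ℝ), (∀ i, x i ≤ 0) →
      ∃ f : α → Fin n, ∀ i, x i ≤ ∑ e ∈ M with f e = i, v i e := fun M x hx =>
    ⟨fun _ => Classical.arbitrary _, fun i => (hx i).trans (sum_nonneg fun e _ => hv i e)⟩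
  induction N with
  | zero =>
    intro M l x hlen _ _ hφ
    refine triv M x fun i => ?_
    by_contra! hi
    have h1 : minBudget (l i) (x i) = 1 := by
      rw [List.length_eq_zero_iff.mp (hlen i), minBudget, if_neg (not_le.mpr hi)]
      simp [bidR]
    have h2 : minBudget (l i) (x i) ≤ ∑ j, minBudget (l j) (x j) := by
      refine single_le_sum (f := fun j => minBudget (l j) (x j)) (fun j _ => ?_) (mem_univ i)
      have := bidR_nonneg (l j) (x j)
      simp only [minBudget]
      split_ifs <;> positivity
    linarith
  | succ N ih =>
    intro M l x hlen hs hdom hφ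
    by_cases hx : ∃ i, 0 < x i
    swap
    · exact triv M x (by simpa using hx)
    have hcons : ∀ i, ∃ w t, l i = w :: t := fun i =>
      List.exists_cons_of_length_eq_add_one (hlen i)
    choose w t hl using hcons
    obtain rfl : l = fun i => w i :: t i := funext hl
    simp only [List.pairwise_cons, List.length_cons, Nat.add_right_cancel_iff] at hs hlen
    obtain ⟨i, hi⟩ := exists_winner w x t hφ hx
    obtain ⟨e, he⟩ : ({e ∈ M | w i ≤ v i e} : Finset α).Nonempty := by
      rw [← card_pos]
      refine lt_of_lt_of_le ?_ (hdom i (w i))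
      rw [List.countP_cons_of_pos (by simp)]
      exact Nat.succ_pos _
    rw [mem_filter] at he
    obtain ⟨f, hf⟩ := ih (M.erase e) t _ hlen (fun j => (hs j).2) (by
      intro j τ
      rcases le_or_gt τ (w j) with h | h
      · have h1 := hdom j τ
        rw [List.countP_cons_of_pos (by simpa using h)] at h1
        rw [filter_erase]
        have := pred_card_le_card_erase (a := e) (s := {e ∈ M | τ ≤ v j e})
        omega
      · rw [List.countP_eq_zero.mpr]
        · exact Nat.zero_le _
        · intro u hu
          have := (hs j).1 u hu
          simp only [decide_eq_true_eq, not_le]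
          linarith) hi
    refine ⟨Function.update f e i, fun j => ?_⟩
    have hfj := hf j
    rw [sum_filter] at hfj ⊢
    rw [← add_sum_erase M _ he.1, Function.update_self]
    have hcongr : ∑ a ∈ M.erase e, (if Function.update f e i a = j then v j a else 0) =
        ∑ a ∈ M.erase e, if f a = j then v j a else 0 :=
      sum_congr rfl fun a ha => by rw [Function.update_of_ne (ne_of_mem_erase ha)]
    rw [hcongr]
    rcases eq_or_ne j i with rfl | hji
    · rw [Function.update_self] at hfj
      rw [if_pos rfl]
      linarith [he.2]
    · rw [Function.update_of_ne hji] at hfj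
      rw [if_neg hji.symm]
      linarith

/-! ### From the maximin share to the threshold -/

theorem exists_partition_MMSg {m k : ℕ} (hk : 1 ≤ k) (v : Fin m → ℝ) :
    ∃ P : Fin k → Finset (Fin m), IsPartition P ∧ ∀ j, MMSg v k ≤ bundleVal v (P j) := by
  have : Nonempty {P : Fin k → Finset (Fin m) // IsPartition P} :=
    ⟨⟨fun j => if j = ⟨0, hk⟩ then univ else ∅, by
      intro i j hij
      dsimp only
      by_cases hi : i = ⟨0, hk⟩
      · rw [if_neg (c := j = _) (fun h => hij (hi.trans h.symm))]
        exact disjoint_empty_right _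
      · rw [if_neg hi]
        exact disjoint_empty_left _, fun e => ⟨⟨0, hk⟩, by simp⟩⟩⟩
  obtain ⟨P, hP⟩ := exists_eq_ciSup_of_finite
    (f := fun P : {P : Fin k → Finset (Fin m) // IsPartition P} => ⨅ j : Fin k, bundleVal v (P.1 j))
  refine ⟨P.1, P.2, fun j => ?_⟩
  rw [MMSg, ← hP]
  exact ciInf_le (Set.finite_range _).bddBelow j

/-- The values of all items in decreasing order. -/
def sortedVals {m : ℕ} (u : Fin m → ℝ) : List ℝ := (univ.val.map u).sort (· ≥ ·)

theorem coe_sortedVals {m : ℕ} (u : Fin m → ℝ) : (sortedVals u : Multiset ℝ) = univ.val.map u :=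
  Multiset.sort_eq _ _

/-- If the items can be split into `k` bundles of value at least `2`, then the threshold for
value `1` is at least `k`. -/
theorem le_bidR_sortedVals {m k : ℕ} {u : Fin m → ℝ} (hu : ∀ e, 0 ≤ u e)
    {P : Fin k → Finset (Fin m)} (hP : IsPartition P) (h2 : ∀ j, 2 ≤ bundleVal u (P j)) :
    (k : ℝ) ≤ bidR (sortedVals u) 1 := by
  refine le_bidR_one _ k ?_ ?_ ?_
  · exact Multiset.pairwise_sort _ _
  · intro w hw
    rw [← Multiset.mem_coe, coe_sortedVals] at hw
    obtain ⟨e, _, rfl⟩ := Multiset.mem_map.mp hw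
    exact hu e
  · have hc : (sortedVals u).countP (1 ≤ ·) = #{e | 1 ≤ u e} := by
      rw [← Multiset.coe_countP, coe_sortedVals, Multiset.countP_map]
      rfl
    have hf : ((sortedVals u).filter (· < 1)).sum = ∑ e with u e < 1, u e := by
      rw [← Multiset.sum_coe, ← Multiset.filter_coe, coe_sortedVals, Multiset.filter_map]
      rfl
    rw [hc, hf]
    -- an item of value at least `1` is counted as `2`, which is enough for its bundle
    set g : Fin m → ℝ := fun e => if u e < 1 then u e else 2 with hg
    have hg0 : ∀ e, 0 ≤ g e := fun e => by
      have := hu e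
      simp only [hg]; split_ifs <;> linarith
    have hj : ∀ j, 2 ≤ ∑ e ∈ P j, g e := by
      intro j
      by_cases hbig : ∃ e ∈ P j, 1 ≤ u e
      · obtain ⟨e, he, h1⟩ := hbig
        calc (2 : ℝ) = g e := by simp [hg, not_lt.mpr h1]
          _ ≤ _ := single_le_sum (fun e _ => hg0 e) he
      · push Not at hbig
        refine (h2 j).trans (sum_le_sum fun e he => ?_)
        simp [hg, hbig e he]
    calc 2 * (k : ℝ) = ∑ j : Fin k, (2 : ℝ) := by simp [mul_comm]
      _ ≤ ∑ j, ∑ e ∈ P j, g e := sum_le_sum fun j _ => hj j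
      _ = ∑ e ∈ univ.biUnion P, g e := (sum_biUnion fun i _ j _ h => hP.1 i j h).symm
      _ ≤ ∑ e, g e := sum_le_univ_sum_of_nonneg hg0
      _ = _ := by
        rw [sum_ite, add_comm, sum_const, nsmul_eq_mul, mul_comm]
        simp only [not_lt]

/-- the share (1/2)·MMS-hat, given by (v,b) ↦ (1/2)·MMS(v, b̂) where
b̂ = 1/⌊1/b⌋ is the unit upper bound of b, is feasible ex-post for additive
valuations over goods and arbitrary entitlements. -/
theorem half_MMShat_feasible (n m : ℕ) (v : Fin n → Fin m → ℝ)
    (hv : ∀ i j, 0 ≤ v i j)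
    (b : Fin n → ℝ) (hb : ∀ i, 0 < b i) (hsum : ∑ i, b i = 1) :
    ∃ A : Fin n → Finset (Fin m), IsPartition A ∧
      ∀ i, (1 / 2) * MMSg (v i) ⌊1 / b i⌋₊ ≤ bundleVal (v i) (A i) := by
  have hne : Nonempty (Fin n) := by
    by_contra h
    rw [not_nonempty_iff] at h
    simp at hsum
  have hb1 : ∀ i, b i ≤ 1 := fun i =>
    hsum ▸ single_le_sum (fun j _ => (hb j).le) (mem_univ i)
  -- rescaled valuations for which the need is `1`, or `0` if the maximin share vanishes
  have hux : ∀ i, ∃ (u : Fin m → ℝ) (x : ℝ), (∀ e, 0 ≤ u e) ∧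
      minBudget (sortedVals u) x < b i ∧
      ∀ S, x ≤ ∑ e ∈ S, u e → (1 / 2) * MMSg (v i) ⌊1 / b i⌋₊ ≤ bundleVal (v i) S := by
    intro i
    set k := ⌊1 / b i⌋₊ with hk
    have hk1 : 1 ≤ k := Nat.le_floor (by simpa using (one_le_div (hb i)).mpr (hb1 i))
    rcases le_or_gt (MMSg (v i) k) 0 with h0 | h0
    · refine ⟨v i, 0, hv i, by simpa [minBudget] using hb i, fun S hS => ?_⟩
      exact le_trans (by linarith) hS
    · obtain ⟨P, hP, hPv⟩ := exists_partition_MMSg hk1 (v i)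
      refine ⟨fun e => 2 / MMSg (v i) k * v i e, 1, fun e => ?_, ?_, fun S hS => ?_⟩
      · have := hv i e
        positivity
      · have hR := le_bidR_sortedVals (u := fun e => 2 / MMSg (v i) k * v i e)
          (fun e => by have := hv i e; positivity) hP (fun j => by
            have := hPv j
            rw [bundleVal, ← mul_sum, ← bundleVal, div_mul_eq_mul_div, le_div_iff₀ h0]
            linarith)
        rw [minBudget, if_neg (by norm_num), div_lt_comm₀ _ (hb i)]
        · have := Nat.lt_floor_add_one (1 / b i)
          rw [← hk] at this
          linarith
        · have : (0 : ℝ) ≤ k := Nat.cast_nonneg k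
          linarith
      · rw [← mul_sum, ← bundleVal, div_mul_eq_mul_div, le_div_iff₀ h0] at hS
        linarith
  choose u x hu hφ hux using hux
  obtain ⟨f, hf⟩ := exists_assignment u hu m univ (fun i => sortedVals (u i)) x
    (fun i => by rw [← Multiset.coe_card, coe_sortedVals]; simp)
    (fun i => Multiset.pairwise_sort _ _)
    (fun i τ => by
      rw [← Multiset.coe_countP, coe_sortedVals, Multiset.countP_map]
      rfl)
    (hsum ▸ sum_lt_sum_of_nonempty univ_nonempty fun i _ => hφ i)
  refine ⟨fun i => {e | f e = i}, ⟨fun i j hij => ?_, fun e => ⟨f e, by simp⟩⟩,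
    fun i => hux i _ (hf i)⟩
  rw [disjoint_filter]
  exact fun e _ h1 h2 => hij (h1.symm.trans h2)
end
end

section
/- For every number of agents n, every set of m indivisible goods M = {1,…,m}, every additive valuations v_1,…,v_n over goods on M, and every entitlements b_1,…,b_n > 0 with ∑_{i=1}^n b_i = 1, there exists an allocation (S_1,…,S_n) of M such that v_i(S_i) ≥ (1/2)·TPS(v_i, b̂_i) for every agent i, where TPS denotes the truncated proportional share. -/
/-!
Normalise agent `i` by truncating her valuation at `z = TPS(v_i, 1/k)`, where `k = ⌊1/b_i⌋`: the
truncated values are at most `z` and sum to `k z`, and `t = z / 2` has to be secured.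

The proof is a bidding argument, run through a potential. `lam l t ∈ [0, 1]` is the fraction of the
total budget with which an agent can secure value `t` from items with values `l` (listed in
decreasing order) when in each round the highest bidder pays her bid and takes an item. If `ℓ` and
`w` are the potentials after losing, respectively winning, the top item, then
`lam = ℓ / (1 + ℓ - w)`.

* `exists_assignment`: if the potentials of the agents sum to less than `1`, everyone can be
  satisfied. Give the agent maximising `Q = 1 + ℓ - w` her favourite item. Every other potential
  grows by a factor of at most `Q`, since losing the top item is the worst loss
  (`lam_erase_le`), and the new sum is at most `1 - Q (1 - ∑ lam) < 1`.
* `lam_le_inv`: values in `[0, 2t]` with sum at least `2 k t` have potential at most `1 / (k + 1)`.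
  Consider `k + 1` clones of the agent. However the items are handed out in decreasing order to
  clones that do not have `t` yet, no clone exceeds `2t`, so by counting at most one clone ends
  below `t`. Hence the potentials of the clones sum to at most `1` when no item is left, and
  `sum_lam_le_one` carries this bound back through the recursion.

Finally `b_i > 1 / (k_i + 1)` gives `∑ lam ≤ ∑ 1 / (k_i + 1) < ∑ b_i = 1`.
-/

open Finset

noncomputable section

/-- The truncated proportional share: TPS(v,b) = max { z ≥ 0 : b·∑_j min(v(j), z) = z }. -/
def TPS {m : ℕ} (v : Fin m → ℝ) (b : ℝ) : ℝ :=
  sSup {z : ℝ | 0 ≤ z ∧ b * ∑ j, min (v j) z = z}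

/-! ### The potential -/

/-- The bidding potential: the fraction of the total budget that suffices to secure value `t` from
items of values `l`. It is `0` once `t ≤ 0`, and `1` when `t > 0` and no item is left. -/
def lam : List ℝ → ℝ → ℝ
  | [], t => if t ≤ 0 then 0 else 1
  | a :: l, t => lam l t / (1 + lam l t - lam l (t - a))

/-- Monotonicity of the one-round recursion in both potentials. -/
lemma step_mono {x y x' y' : ℝ} (hx : 0 ≤ x) (hyx : y ≤ x) (hyx' : y' ≤ x') (hx' : x' ≤ 1)
    (h1 : x ≤ x') (h2 : y ≤ y') : x / (1 + x - y) ≤ x' / (1 + x' - y') := by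
  rw [div_le_div_iff₀ (by linarith) (by linarith)]
  nlinarith [mul_nonneg hx (sub_nonneg.2 h2), mul_nonneg (sub_nonneg.2 h1)
    (sub_nonneg.2 (hyx.trans (h1.trans hx')))]

lemma lam_props (l : List ℝ) (hl : ∀ a ∈ l, 0 ≤ a) :
    (∀ t, 0 ≤ lam l t) ∧ (∀ t, lam l t ≤ 1) ∧ Monotone (lam l) := by
  induction l with
  | nil =>
    refine ⟨fun t => ?_, fun t => ?_, fun t t' h => ?_⟩ <;> simp only [lam] <;> split_ifs <;>
      first | (exfalso; linarith) | norm_num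
  | cons a l ih =>
    obtain ⟨h0, h1, hm⟩ := ih (fun x hx => hl x (by simp [hx]))
    have ha : 0 ≤ a := hl a (by simp)
    have hw : ∀ t, lam l (t - a) ≤ lam l t := fun t => hm (by linarith)
    refine ⟨fun t => ?_, fun t => ?_, fun t t' h => ?_⟩
    · exact div_nonneg (h0 t) (by linarith [hw t])
    · exact div_le_one_of_le₀ (by linarith [h1 (t - a)]) (by linarith [hw t])
    · exact step_mono (h0 t) (hw t) (hw t') (h1 t') (hm h) (hm (by linarith))

/-- More valuable items lower the potential. -/
lemma lam_anti {l l' : List ℝ} (h : List.Forall₂ (· ≤ ·) l l') (hl : ∀ a ∈ l, 0 ≤ a)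
    (hl' : ∀ a ∈ l', 0 ≤ a) (t : ℝ) : lam l' t ≤ lam l t := by
  induction h generalizing t with
  | nil => exact le_rfl
  | @cons a b l l' hab _ ih =>
    have hp : ∀ x ∈ l, 0 ≤ x := fun x hx => hl x (by simp [hx])
    have hp' : ∀ x ∈ l', 0 ≤ x := fun x hx => hl' x (by simp [hx])
    obtain ⟨-, h1, hm⟩ := lam_props l hp
    obtain ⟨h0', -, hm'⟩ := lam_props l' hp'
    have ha : 0 ≤ a := hl a (by simp)
    have hb : 0 ≤ b := hl' b (by simp)
    exact step_mono (h0' t) (hm' (by linarith)) (hm (by linarith)) (h1 t) (ih hp hp' t)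
      ((ih hp hp' _).trans (hm (by linarith)))

lemma lam_of_nonpos (l : List ℝ) (hl : ∀ a ∈ l, 0 ≤ a) {t : ℝ} (ht : t ≤ 0) : lam l t = 0 := by
  induction l with
  | nil => simp [lam, ht]
  | cons a l ih => simp [lam, ih (fun x hx => hl x (by simp [hx]))]

/-- In a list sorted by decreasing value, deleting any item leaves at least as good a list as
deleting the first one. -/
lemma forall₂_tail_erase {α : Type*} [DecidableEq α] (f : α → ℝ) (a : α) (l : List α)
    (hs : (a :: l).Pairwise (fun x y => f y ≤ f x)) (j : α) (hj : j ∈ a :: l) :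
    List.Forall₂ (· ≤ ·) (l.map f) (((a :: l).erase j).map f) := by
  induction l generalizing a with
  | nil => simp at hj; simp [hj]
  | cons b l ih =>
    by_cases hja : a = j
    · subst hja
      simp only [List.erase_cons_head]
      exact List.forall₂_refl _
    · rw [List.erase_cons_tail (by simpa using hja)]
      have hj' : j ∈ b :: l := by
        rcases List.mem_cons.1 hj with h | h
        · exact absurd h.symm hja
        · exact h
      rw [List.pairwise_cons] at hs
      simp only [List.map_cons]
      exact List.Forall₂.cons (hs.1 b (by simp)) (ih b hs.2 hj')

/-- Losing the most valuable item is the worst loss. -/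
lemma lam_erase_le {α : Type*} [DecidableEq α] (f : α → ℝ) (hf : ∀ x, 0 ≤ f x) (a : α)
    (l : List α) (hs : (a :: l).Pairwise (fun x y => f y ≤ f x)) (j : α) (hj : j ∈ a :: l)
    (t : ℝ) : lam (((a :: l).erase j).map f) t ≤ lam (l.map f) t := by
  refine lam_anti (forall₂_tail_erase f a l hs j hj) ?_ ?_ t <;>
  · intro x hx
    obtain ⟨y, -, rfl⟩ := List.mem_map.1 hx
    exact hf y

/-! ### Allocating when the potentials sum to less than one -/

/-- If the potentials sum to less than `1`, all targets can be met simultaneously. The list `L i`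
enumerates the remaining items `S` in the preference order of agent `i`; the allocation is
encoded as a map `σ` from items to agents. -/
lemma exists_assignment_s1 {ι α : Type*} [Fintype ι] [Nonempty ι] [DecidableEq ι] [DecidableEq α]
    (u : ι → α → ℝ) (hu : ∀ i e, 0 ≤ u i e) (N : ℕ) :
    ∀ (S : Finset α) (L : ι → List α) (t : ι → ℝ), S.card = N → (∀ i, (L i).Nodup) →
      (∀ i e, e ∈ L i ↔ e ∈ S) → (∀ i, (L i).Pairwise (fun x y => u i y ≤ u i x)) →
      ∑ i, lam ((L i).map (u i)) (t i) < 1 →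
      ∃ σ : α → ι, ∀ i, t i ≤ ∑ e ∈ S, if σ e = i then u i e else 0 := by
  have hmap : ∀ i (l : List α), ∀ x ∈ l.map (u i), 0 ≤ x := by
    intro i l x hx
    obtain ⟨y, -, rfl⟩ := List.mem_map.1 hx
    exact hu i y
  induction N with
  | zero =>
    intro S L t hS _ hmem _ hlt
    rw [Finset.card_eq_zero] at hS
    subst hS
    refine ⟨fun _ => Classical.arbitrary ι, fun i => ?_⟩
    have hL : L i = [] := List.eq_nil_iff_forall_not_mem.2 fun e he => by simpa using (hmem i e).1 he
    have hi := Finset.single_le_sum (f := fun i => lam ((L i).map (u i)) (t i))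
      (fun i _ => (lam_props _ (hmap i (L i))).1 (t i)) (Finset.mem_univ i)
    simp only [hL, List.map_nil, lam] at hi
    by_contra hcon
    rw [if_neg (by simpa using hcon)] at hi
    linarith
  | succ N ih =>
    intro S L t hS hnd hmem hsort hlt
    have hne : ∀ i, ∃ a l, L i = a :: l := by
      intro i
      obtain ⟨e, he⟩ := Finset.card_pos.1 (by omega : 0 < S.card)
      exact List.exists_cons_of_ne_nil (List.ne_nil_of_mem ((hmem i e).2 he))
    choose a l hL using hne
    set ell : ι → ℝ := fun i => lam ((l i).map (u i)) (t i) with hell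
    set w : ι → ℝ := fun i => lam ((l i).map (u i)) (t i - u i (a i)) with hw
    have hlam : ∀ i, lam ((L i).map (u i)) (t i) = ell i / (1 + ell i - w i) := by
      intro i; rw [hL i]; rfl
    have hwl : ∀ i, w i ≤ ell i := fun i =>
      (lam_props _ (hmap i (l i))).2.2 (by linarith [hu i (a i)])
    -- `s` is the highest bidder: the relative bid of agent `i` is `1 - 1 / (1 + ell i - w i)`
    obtain ⟨s, hs⟩ := Finite.exists_max (fun i => 1 + ell i - w i)
    have haS : a s ∈ S := (hmem s _).1 (by simp [hL s])
    obtain ⟨σ, hσ⟩ := ih (S.erase (a s)) (fun i => (L i).erase (a s))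
      (Function.update t s (t s - u s (a s)))
      (by rw [Finset.card_erase_of_mem haS, hS]; rfl)
      (fun i => (hnd i).erase _)
      (fun i e => by rw [(hnd i).mem_erase_iff, hmem, Finset.mem_erase])
      (fun i => (hsort i).sublist List.erase_sublist)
      (by
        have hself : lam (((L s).erase (a s)).map (u s))
            (Function.update t s (t s - u s (a s)) s) = w s := by
          simp [hL s, hw]
        have hother : ∀ i ∈ Finset.univ.erase s, lam (((L i).erase (a s)).map (u i))
            (Function.update t s (t s - u s (a s)) i)
            ≤ (1 + ell s - w s) * lam ((L i).map (u i)) (t i) := by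
          intro i hi
          rw [Function.update_of_ne (Finset.ne_of_mem_erase hi)]
          have h1 : lam (((L i).erase (a s)).map (u i)) (t i) ≤ ell i := by
            have hmem' : a s ∈ a i :: l i := by rw [← hL i]; exact (hmem i _).2 haS
            have hsrt := hsort i
            rw [hL i] at hsrt ⊢
            exact lam_erase_le (u i) (hu i) (a i) (l i) hsrt (a s) hmem' (t i)
          have hpos : 0 < 1 + ell i - w i := by linarith [hwl i]
          have h2 : ell i = (1 + ell i - w i) * lam ((L i).map (u i)) (t i) := by
            rw [hlam i]; field_simp
          refine h1.trans (h2.le.trans ?_)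
          exact mul_le_mul_of_nonneg_right (hs i) ((lam_props _ (hmap i (L i))).1 _)
        rw [← Finset.add_sum_erase _ _ (Finset.mem_univ s), hself]
        rw [← Finset.add_sum_erase _ _ (Finset.mem_univ s)] at hlt
        have hsum := Finset.sum_le_sum hother
        rw [← Finset.mul_sum] at hsum
        have hpos : 0 < 1 + ell s - w s := by linarith [hwl s]
        have h2 : (1 + ell s - w s) * lam ((L s).map (u s)) (t s) = ell s := by
          rw [hlam s]; field_simp
        have h3 := mul_lt_mul_of_pos_left hlt hpos
        rw [mul_add, h2] at h3
        linarith)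
    refine ⟨Function.update σ (a s) s, fun i => ?_⟩
    have hrest : ∑ e ∈ S.erase (a s), (if Function.update σ (a s) s e = i then u i e else 0)
        = ∑ e ∈ S.erase (a s), (if σ e = i then u i e else 0) :=
      Finset.sum_congr rfl fun e he => by
        rw [Function.update_of_ne (Finset.ne_of_mem_erase he)]
    rw [← Finset.add_sum_erase _ _ haS, hrest, Function.update_self]
    have hi := hσ i
    by_cases his : s = i
    · subst his
      rw [Function.update_self] at hi
      rw [if_pos rfl]
      linarith
    · rw [Function.update_of_ne (Ne.symm his)] at hi
      rw [if_neg his]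
      linarith

/-! ### Bounding the potential -/

/-- The potentials of `c` clones that already hold `x i` sum to at most `1`, provided that all
clones hold at most `2t`, a remaining item cannot push a clone below `t` beyond `2t`, and the total
value is at least `2 (c - 1) t`. -/
lemma sum_lam_le_one {ι : Type*} [Fintype ι] [DecidableEq ι] {t : ℝ} (ht : 0 < t) (l : List ℝ)
    (hl : ∀ a ∈ l, 0 ≤ a) (hs : l.Pairwise (fun x y => y ≤ x)) :
    ∀ x : ι → ℝ, (∀ i, 0 ≤ x i) → (∀ i, x i ≤ 2 * t) →
      (∀ i, x i < t → ∀ a ∈ l, x i + a ≤ 2 * t) →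
      ((Fintype.card ι : ℝ) - 1) * (2 * t) ≤ ∑ i, x i + l.sum →
      ∑ i, lam l (t - x i) ≤ 1 := by
  induction l with
  | nil =>
    intro x _ hx _ hsum
    simp only [lam, List.sum_nil, add_zero] at hsum ⊢
    by_contra hcon
    -- each clone below `t` falls short of `2t` by more than `t`
    have hle : ∀ i ∈ Finset.univ, x i ≤ 2 * t - t * (if t - x i ≤ 0 then 0 else 1) := by
      intro i _
      split_ifs with h
      · simpa using hx i
      · linarith
    have hex : ∃ i ∈ Finset.univ, x i < 2 * t - t * (if t - x i ≤ 0 then 0 else 1) := by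
      by_contra hno
      push Not at hno
      apply hcon
      have : ∀ i ∈ Finset.univ, (if t - x i ≤ 0 then (0 : ℝ) else 1) = 0 := by
        intro i hi
        have := hno i hi
        split_ifs at this ⊢ with h
        · rfl
        · linarith
      rw [Finset.sum_eq_zero this]
      norm_num
    have hlt := Finset.sum_lt_sum hle hex
    rw [Finset.sum_sub_distrib, Finset.sum_const, Finset.card_univ, nsmul_eq_mul,
      ← Finset.mul_sum] at hlt
    have hcount : ∑ i, (if t - x i ≤ 0 then (0 : ℝ) else 1)
        = ((Finset.univ.filter fun i => ¬ (t - x i ≤ 0)).card : ℝ) := by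
      rw [Finset.card_filter]
      push_cast
      exact Finset.sum_congr rfl fun i _ => by split_ifs <;> simp_all
    rw [hcount] at hcon hlt
    have h2 : (2 : ℝ) ≤ ((Finset.univ.filter fun i => ¬ (t - x i ≤ 0)).card : ℝ) := by
      have : 1 < (Finset.univ.filter fun i => ¬ (t - x i ≤ 0)).card := by
        exact_mod_cast not_le.1 hcon
      exact_mod_cast this
    nlinarith
  | cons a l ih =>
    intro x hx0 hx hroom hsum
    have ha : 0 ≤ a := hl a (by simp)
    have hl' : ∀ y ∈ l, 0 ≤ y := fun y hy => hl y (by simp [hy])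
    rw [List.pairwise_cons] at hs
    obtain ⟨h0, -, hm⟩ := lam_props l hl'
    obtain ⟨h0c, -, -⟩ := lam_props (a :: l) hl
    set E : ℝ := ∑ i, lam l (t - x i) with hE
    have hE0 : 0 ≤ E := Finset.sum_nonneg fun i _ => h0 _
    have key : ∀ i ∈ Finset.univ, lam (a :: l) (t - x i) * E ≤ lam l (t - x i) := by
      intro i _
      rcases le_or_gt t (x i) with hti | hti
      · rw [lam_of_nonpos (a :: l) hl (by linarith), zero_mul]
        exact h0 _
      · have hi := ih hl' hs.2 (Function.update x i (x i + a))
          (fun j => by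
            by_cases hji : j = i
            · subst hji; rw [Function.update_self]; linarith [hx0 j]
            · rw [Function.update_of_ne hji]; exact hx0 j)
          (fun j => by
            by_cases hji : j = i
            · subst hji; rw [Function.update_self]; exact hroom j hti a (by simp)
            · rw [Function.update_of_ne hji]; exact hx j)
          (fun j hj y hy => by
            by_cases hji : j = i
            · subst hji
              rw [Function.update_self] at hj ⊢
              linarith [hs.1 y hy, hx0 j]
            · rw [Function.update_of_ne hji] at hj ⊢
              exact hroom j hj y (by simp [hy]))
          (by
            rw [List.sum_cons] at hsum
            rw [← Finset.add_sum_erase _ _ (Finset.mem_univ i)] at hsum ⊢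
            rw [Function.update_self, Finset.sum_congr rfl (fun j hj =>
              Function.update_of_ne (Finset.ne_of_mem_erase hj) (x i + a) x)]
            linarith)
        rw [← Finset.add_sum_erase _ _ (Finset.mem_univ i), Function.update_self,
          Finset.sum_congr rfl (fun j hj => by
            rw [Function.update_of_ne (Finset.ne_of_mem_erase hj) (x i + a) x])] at hi
        have hE' : E = lam l (t - x i) + ∑ j ∈ Finset.univ.erase i, lam l (t - x j) :=
          (Finset.add_sum_erase _ _ (Finset.mem_univ i)).symm
        have hw : lam l (t - x i - a) ≤ lam l (t - x i) := hm (by linarith)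
        rw [show t - (x i + a) = t - x i - a by ring] at hi
        have hpos : 0 < 1 + lam l (t - x i) - lam l (t - x i - a) := by linarith
        calc lam (a :: l) (t - x i) * E
            ≤ lam (a :: l) (t - x i) * (1 + lam l (t - x i) - lam l (t - x i - a)) :=
              mul_le_mul_of_nonneg_left (by linarith) (h0c _)
          _ = lam l (t - x i) := by
              simp only [lam]
              field_simp
    have hfin := Finset.sum_le_sum key
    rw [← Finset.sum_mul, ← hE] at hfin
    rcases hE0.eq_or_lt with hz | hpos
    · have hzero : ∀ i ∈ Finset.univ, lam l (t - x i) = 0 :=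
        (Finset.sum_eq_zero_iff_of_nonneg fun i _ => h0 _).1 hz.symm
      have : ∑ i, lam (a :: l) (t - x i) = 0 :=
        Finset.sum_eq_zero fun i hi => by simp [lam, hzero i hi]
      rw [this]
      norm_num
    · exact le_of_mul_le_mul_right (by linarith) hpos

/-- The initial potential of an agent whose `k`-th part of the total value is at least `2t`. -/
lemma lam_le_inv (k : ℕ) {t : ℝ} (l : List ℝ) (hl : ∀ a ∈ l, 0 ≤ a) (hl2 : ∀ a ∈ l, a ≤ 2 * t)
    (hs : l.Pairwise (fun x y => y ≤ x)) (hsum : k * (2 * t) ≤ l.sum) :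
    lam l t ≤ 1 / ((k : ℝ) + 1) := by
  rcases le_or_gt t 0 with ht | ht
  · rw [lam_of_nonpos l hl ht]
    positivity
  · have h := sum_lam_le_one (ι := Fin (k + 1)) ht l hl hs (fun _ => 0) (fun _ => le_rfl)
      (fun _ => by linarith) (fun _ _ a ha => by linarith [hl2 a ha]) (by simpa using hsum)
    simp only [sub_zero, Finset.sum_const, Finset.card_univ, Fintype.card_fin, nsmul_eq_mul] at h
    rw [le_div_iff₀ (by positivity)]
    push_cast at h
    linarith

/-- The maximum defining `TPS` is attained. -/
lemma TPS_spec {m : ℕ} (v : Fin m → ℝ) (hv : ∀ j, 0 ≤ v j) {b : ℝ} (hb : 0 ≤ b) :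
    0 ≤ TPS v b ∧ b * ∑ j, min (v j) (TPS v b) = TPS v b := by
  have hclosed : IsClosed {z : ℝ | 0 ≤ z ∧ b * ∑ j, min (v j) z = z} :=
    (isClosed_le continuous_const continuous_id).inter
      (isClosed_eq (by fun_prop) continuous_id)
  refine hclosed.csSup_mem ⟨0, le_rfl, ?_⟩ ⟨b * ∑ j, v j, ?_⟩
  · simp [min_eq_right (hv _)]
  · rintro z ⟨-, hz⟩
    rw [← hz]
    exact mul_le_mul_of_nonneg_left (Finset.sum_le_sum fun j _ => min_le_left _ _) hb

/-- for additive valuations over goods and arbitrary entitlements there is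
an allocation giving every agent i at least (1/2)·TPS(v_i, b̂_i), where b̂ = 1/⌊1/b⌋. -/
theorem half_TPShat_feasible (n m : ℕ) (v : Fin n → Fin m → ℝ)
    (hv : ∀ i j, 0 ≤ v i j)
    (b : Fin n → ℝ) (hb : ∀ i, 0 < b i) (hsum : ∑ i, b i = 1) :
    ∃ A : Fin n → Finset (Fin m), IsPartition A ∧
      ∀ i, (1 / 2) * TPS (v i) ((⌊1 / b i⌋₊ : ℝ))⁻¹ ≤ bundleVal (v i) (A i) := by
  classical
  have hn : Nonempty (Fin n) := by
    by_contra hempty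
    rw [not_nonempty_iff] at hempty
    simp at hsum
  set k : Fin n → ℕ := fun i => ⌊1 / b i⌋₊ with hk
  have hb1 : ∀ i, b i ≤ 1 := fun i => by
    rw [← hsum]
    exact Finset.single_le_sum (fun j _ => (hb j).le) (Finset.mem_univ i)
  have hkpos : ∀ i, (0 : ℝ) < k i := fun i => by
    have : 1 ≤ k i := Nat.le_floor (by rw [Nat.cast_one, le_div_iff₀ (hb i)]; linarith [hb1 i])
    exact_mod_cast this
  have hkb : ∀ i, 1 / ((k i : ℝ) + 1) < b i := fun i => by
    have h := Nat.lt_floor_add_one (1 / b i)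
    rw [div_lt_iff₀ (hb i)] at h
    rw [div_lt_iff₀ (by positivity)]
    linarith
  set z : Fin n → ℝ := fun i => TPS (v i) ((k i : ℝ))⁻¹ with hz
  have hzs : ∀ i, 0 ≤ z i ∧ ∑ j, min (v i j) (z i) = k i * z i := fun i => by
    obtain ⟨h0, h1⟩ := TPS_spec (v i) (hv i) (inv_nonneg.2 (hkpos i).le)
    refine ⟨h0, ?_⟩
    rw [inv_mul_eq_iff_eq_mul₀ (hkpos i).ne'] at h1
    exact h1
  set u : Fin n → Fin m → ℝ := fun i j => min (v i j) (z i) with hu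
  have hu0 : ∀ i j, 0 ≤ u i j := fun i j => le_min (hv i j) (hzs i).1
  set L : Fin n → List (Fin m) := fun i =>
    (List.finRange m).mergeSort (fun x y => decide (u i y ≤ u i x)) with hLdef
  have hperm : ∀ i, (L i).Perm (List.finRange m) := fun i => List.mergeSort_perm _ _
  have hsort : ∀ i, (L i).Pairwise (fun x y => u i y ≤ u i x) := fun i => by
    have h := List.pairwise_mergeSort (le := fun x y => decide (u i y ≤ u i x))
      (fun x y w h1 h2 => by simp only [decide_eq_true_eq] at *; exact h2.trans h1)
      (fun x y => by simpa using le_total (u i y) (u i x)) (List.finRange m)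
    simpa using h
  obtain ⟨σ, hσ⟩ := exists_assignment_s1 u hu0 m Finset.univ L (fun i => (1 / 2) * z i) (by simp)
    (fun i => (hperm i).nodup_iff.2 (List.nodup_finRange m))
    (fun i e => by simp [(hperm i).mem_iff]) hsort
    (by
      calc ∑ i, lam ((L i).map (u i)) ((1 / 2) * z i)
          ≤ ∑ i, 1 / ((k i : ℝ) + 1) := Finset.sum_le_sum fun i _ => by
            refine lam_le_inv (k i) _ ?_ ?_ ?_ ?_
            · intro a ha
              obtain ⟨y, -, rfl⟩ := List.mem_map.1 ha
              exact hu0 i y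
            · intro a ha
              obtain ⟨y, -, rfl⟩ := List.mem_map.1 ha
              have : u i y ≤ z i := min_le_right _ _
              linarith
            · exact List.pairwise_map.2 (hsort i)
            · rw [((hperm i).map (u i)).sum_eq, ← Fin.sum_univ_def]
              rw [(hzs i).2]
              apply le_of_eq
              ring
        _ < ∑ i, b i := Finset.sum_lt_sum_of_nonempty Finset.univ_nonempty fun i _ => hkb i
        _ = 1 := hsum)
  refine ⟨fun i => Finset.univ.filter fun e => σ e = i, ⟨?_, fun e => ⟨σ e, by simp⟩⟩, fun i => ?_⟩
  · intro i j hij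
    rw [Finset.disjoint_left]
    intro e he he'
    simp only [Finset.mem_filter, Finset.mem_univ, true_and] at he he'
    exact hij (he.symm.trans he')
  · refine (hσ i).trans ?_
    rw [bundleVal, ← Finset.sum_filter]
    exact Finset.sum_le_sum fun e _ => min_le_left _ _
end
end

section
/- For every ε > 0 there exist a number of agents n, a number of goods m, an additive valuation v over goods on M = {1,…,m}, and entitlements b_1,…,b_n > 0 with ∑_{i=1}^n b_i = 1, such that when all n agents have the same valuation v, no allocation (S_1,…,S_n) of M satisfies v(S_i) ≥ (1/2 + ε)·MMS(v, b̂_i) for all agents i. Concretely, one may take m = 2n−2 goods each of value 1 under v, and entitlements with 1/(n+1) < b_n < 1/n and 1/n < b_i < 1/(n−1) for all i ≠ n; then MMS(v, b̂_n) = 1 and MMS(v, b̂_i) = 2 for i ≠ n, and in every allocation some agent falls below a (1/2 + ε) fraction of her MMS-hat value. Hence for every ε > 0, the share (1/2 + ε)·MMS-hat is not feasible ex-post for additive valuations over goods with arbitrary entitlements. -/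
/-!
Two agents and two goods of value 1 suffice for every `ε > 0`. Take entitlements `3/5` and `2/5`,
so that `⌊1 / b i⌋` is `1` and `2` respectively; then the maximin shares are at least `2` and `1`.
To reach a `1/2 + ε` fraction, the first agent needs value at least `1 + 2ε`, hence both goods,
and the second needs positive value, hence at least one good. That is three goods out of two.
-/

open Finset

noncomputable section

/-- Any partition whose bundles are all worth at least `c` certifies `c ≤ MMSg v k`. The supremum
is over a finite set of partitions, hence not a junk value; `0 < k` does the same for the
infimum. -/
lemma le_MMSg {m k : ℕ} (hk : 0 < k) (v : Fin m → ℝ) (c : ℝ) (P : Fin k → Finset (Fin m))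
    (hP : IsPartition P) (hc : ∀ j, c ≤ bundleVal v (P j)) : c ≤ MMSg v k := by
  have : Nonempty (Fin k) := ⟨⟨0, hk⟩⟩
  exact (le_ciInf hc).trans <|
    le_ciSup (f := fun P : {P : Fin k → Finset (Fin m) // IsPartition P} =>
      ⨅ j : Fin k, bundleVal v (P.1 j)) (Set.finite_range _).bddAbove ⟨P, hP⟩

/-- for every ε > 0 the share (1/2 + ε)·MMS-hat is not feasible ex-post
for additive valuations over goods with arbitrary entitlements: there is an instance
(with all agents sharing the same additive valuation) in which every allocation leaves
some agent with value below (1/2 + ε)·MMS(v, b̂_i), where b̂ = 1/⌊1/b⌋. -/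
theorem half_plus_eps_MMShat_infeasible (ε : ℝ) (hε : 0 < ε) :
    ∃ (n m : ℕ) (v : Fin m → ℝ) (b : Fin n → ℝ),
      (∀ j, 0 ≤ v j) ∧ (∀ i, 0 < b i) ∧ (∑ i, b i = 1) ∧
      ∀ A : Fin n → Finset (Fin m), IsPartition A →
        ∃ i, bundleVal v (A i) < (1 / 2 + ε) * MMSg v ⌊1 / b i⌋₊ := by
  refine ⟨2, 2, fun _ => 1, ![3 / 5, 2 / 5], fun _ => zero_le_one, ?_, ?_, ?_⟩
  · intro i
    fin_cases i <;> norm_num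
  · norm_num [Fin.sum_univ_two]
  intro A hA
  by_contra! h
  have f0 : ⌊1 / (![3 / 5, 2 / 5] : Fin 2 → ℝ) 0⌋₊ = 1 := by
    rw [Nat.floor_eq_iff (by norm_num)]
    norm_num
  have f1 : ⌊1 / (![3 / 5, 2 / 5] : Fin 2 → ℝ) 1⌋₊ = 2 := by
    rw [Nat.floor_eq_iff (by norm_num)]
    norm_num
  have m0 : 2 ≤ MMSg (fun _ : Fin 2 => (1 : ℝ)) 1 :=
    le_MMSg one_pos _ _ (fun _ => univ)
      ⟨fun i j hij => absurd (Subsingleton.elim i j) hij, fun e => ⟨0, mem_univ e⟩⟩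
      (fun j => by simp [bundleVal])
  have m1 : 1 ≤ MMSg (fun _ : Fin 2 => (1 : ℝ)) 2 :=
    le_MMSg two_pos _ _ (fun i => {i})
      ⟨fun i j hij => by simpa using hij, fun e => ⟨e, mem_singleton_self e⟩⟩
      (fun j => by simp [bundleVal])
  have h0 := h 0
  have h1 := h 1
  rw [f0] at h0
  rw [f1] at h1
  simp only [bundleVal, sum_const, nsmul_eq_mul, mul_one] at h0 h1
  have c0 : 1 < #(A 0) := by
    have : (1 : ℝ) < #(A 0) := by nlinarith
    exact_mod_cast this
  have c1 : 0 < #(A 1) := by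
    have : (0 : ℝ) < #(A 1) := by nlinarith
    exact_mod_cast this
  have hu := card_le_univ (A 0 ∪ A 1)
  rw [card_union_of_disjoint (hA.1 0 1 (by decide)), Fintype.card_fin] at hu
  omega
end
end

section
/- Let 2 ≤ k_1 ≤ k_2 ≤ … ≤ k_n be a non-decreasing sequence of integers satisfying ∑_{i=1}^n 1/k_i < 1. Then ∑_{i=1}^n 1/(k_i − 1) ≤ s_n, where s_n = ∑_{i=1}^n 1/a_i and (a_i) is the sequence defined by a_1 = 1 and a_{k+1} = a_k(a_k + 1). -/
/-!
Put `u i = aseq i + 1` (Sylvester's sequence `2, 3, 7, 43, …`), so that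
`∑_{i<n} 1/u i = 1 - 1/aseq n` and `∏_{i<n} u i = aseq n`. The proof has two steps, each an
application of Abel summation (`abel_nonneg`).

*Curtiss's theorem* (`curtiss`): if `k` is nondecreasing and `∑_{i<n} 1/k i < 1`, then
`∑_{i<n} 1/k i ≤ ∑_{i<n} 1/u i`. The argument is that of Soundararajan, by strong induction on `n`.
If the inequality fails, then clearing denominators gives
`1/∏ k i ≤ 1 - ∑ 1/k i < 1/aseq n`, so `∏ k i > ∏ u i`. Let `j` minimise the partial sums
`∑_{i<m} log (k i / u i)` over `m ≤ n`; then `j < n`, and from `j` on all partial sums of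
`log (k i / u i)` are nonnegative. Since `1/u - 1/k ≥ (1/k) log (k/u)` and the weights `1/k i`
decrease, Abel summation gives `∑_{j≤i<n} 1/k i ≤ ∑_{j≤i<n} 1/u i`; the induction hypothesis
handles the terms before `j`, a contradiction.

*Weak majorization*: Curtiss's theorem holds for every prefix, so the partial sums of
`1/u i - 1/k i` are all nonnegative. As `f x = x / (1 - x)` is convex and increasing,
`f (1/u i) - f (1/k i) ≥ f' (1/k i) (1/u i - 1/k i)` with nonnegative decreasing weights
`f' (1/k i)`, and Abel summation gives the claim, because `f (1/k) = 1/(k - 1)`.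
-/

open Finset

noncomputable section

/-- The sequence a_1 = 1, a_{k+1} = a_k(a_k + 1) (0-indexed: `aseq 0 = 1`). -/
def aseq : ℕ → ℕ
  | 0 => 1
  | k + 1 => aseq k * (aseq k + 1)

lemma abel_nonneg (w c : ℕ → ℝ) (hw : ∀ i, 0 ≤ w i) (hanti : Antitone w) (n : ℕ)
    (hc : ∀ m ≤ n, 0 ≤ ∑ i ∈ range m, c i) : 0 ≤ ∑ i ∈ range n, w i * c i := by
  -- The stronger bound, with the next weight as a factor on the left, goes through by induction.
  have key : ∀ m, m ≤ n → w m * ∑ i ∈ range m, c i ≤ ∑ i ∈ range m, w i * c i := by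
    intro m
    induction m with
    | zero => simp
    | succ m ih =>
      intro hm
      have h1 := ih (by omega)
      have h2 := mul_le_mul_of_nonneg_right (hanti (Nat.le_succ m)) (hc (m + 1) hm)
      rw [sum_range_succ] at h2 ⊢
      rw [sum_range_succ]
      simp only [Nat.succ_eq_add_one] at h2
      nlinarith
  exact (mul_nonneg (hw n) (hc n le_rfl)).trans (key n le_rfl)

lemma aseq_pos (n : ℕ) : 0 < aseq n := by
  induction n with
  | zero => simp [aseq]
  | succ n ih => rw [aseq]; positivity

lemma sum_sylvester (n : ℕ) :
    ∑ i ∈ range n, (1 : ℝ) / ((aseq i : ℝ) + 1) = 1 - 1 / (aseq n : ℝ) := by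
  induction n with
  | zero => simp [aseq]
  | succ n ih =>
    have h : (0 : ℝ) < aseq n := by exact_mod_cast aseq_pos n
    rw [sum_range_succ, ih, aseq]
    push_cast
    field_simp
    ring

lemma prod_sylvester (n : ℕ) : ∏ i ∈ range n, ((aseq i : ℝ) + 1) = aseq n := by
  induction n with
  | zero => simp [aseq]
  | succ n ih => rw [prod_range_succ, ih, aseq]; push_cast; ring

lemma exists_sum_mul_prod (k : ℕ → ℕ) (hk : ∀ i, 2 ≤ k i) (n : ℕ) :
    ∃ N : ℕ, (∑ i ∈ range n, (1 : ℝ) / k i) * ((∏ i ∈ range n, k i : ℕ) : ℝ) = N := by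
  induction n with
  | zero => exact ⟨0, by simp⟩
  | succ n ih =>
    obtain ⟨N, hN⟩ := ih
    refine ⟨N * k n + ∏ i ∈ range n, k i, ?_⟩
    have h : (k n : ℝ) ≠ 0 := by have := hk n; positivity
    rw [sum_range_succ, prod_range_succ]
    push_cast at hN ⊢
    rw [← hN]
    field_simp

/-- A sum of unit fractions below `1` misses `1` by at least the reciprocal of the product of the
denominators. -/
lemma one_le_gap_mul_prod (k : ℕ → ℕ) (hk : ∀ i, 2 ≤ k i) (n : ℕ)
    (hs : ∑ i ∈ range n, (1 : ℝ) / k i < 1) :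
    1 ≤ (1 - ∑ i ∈ range n, (1 : ℝ) / k i) * ((∏ i ∈ range n, k i : ℕ) : ℝ) := by
  obtain ⟨N, hN⟩ := exists_sum_mul_prod k hk n
  have hP : (0 : ℝ) < ((∏ i ∈ range n, k i : ℕ) : ℝ) := by
    exact_mod_cast prod_pos fun i _ => by have := hk i; omega
  have hlt : (N : ℝ) < ((∏ i ∈ range n, k i : ℕ) : ℝ) := by nlinarith
  have hle : (N : ℝ) + 1 ≤ ((∏ i ∈ range n, k i : ℕ) : ℝ) := by exact_mod_cast hlt
  rw [sub_mul, hN]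
  linarith

/-- Curtiss's theorem: among nondecreasing sequences of denominators, Sylvester's sequence gives
the largest `n`-term sum of unit fractions below `1`. -/
lemma curtiss (k : ℕ → ℕ) (hk : ∀ i, 2 ≤ k i) (hmono : Monotone k) (n : ℕ)
    (hs : ∑ i ∈ range n, (1 : ℝ) / k i < 1) :
    ∑ i ∈ range n, (1 : ℝ) / k i ≤ ∑ i ∈ range n, (1 : ℝ) / ((aseq i : ℝ) + 1) := by
  induction n using Nat.strong_induction_on with
  | _ n ih =>
  by_contra! hcon
  have hkpos : ∀ i, (0 : ℝ) < k i := fun i => by have := hk i; positivity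
  have hupos : ∀ i, (0 : ℝ) < (aseq i : ℝ) + 1 := fun i => by positivity
  have hA : (0 : ℝ) < aseq n := by exact_mod_cast aseq_pos n
  have hgap := one_le_gap_mul_prod k hk n hs
  have hcon' := hcon
  rw [sum_sylvester] at hcon'
  have hprod : (aseq n : ℝ) < ∏ i ∈ range n, (k i : ℝ) := by
    push_cast at hgap
    have hP : (0 : ℝ) < ∏ i ∈ range n, (k i : ℝ) := prod_pos fun i _ => hkpos i
    have h1 : 1 - ∑ i ∈ range n, (1 : ℝ) / k i < 1 / aseq n := by linarith
    have h2 := hgap.trans_lt (mul_lt_mul_of_pos_right h1 hP)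
    rw [one_div_mul_eq_div, one_lt_div hA] at h2
    exact h2
  set c : ℕ → ℝ := fun i => Real.log (k i / ((aseq i : ℝ) + 1)) with hc
  have htot : 0 < ∑ i ∈ range n, c i := by
    rw [hc, ← Real.log_prod fun i _ => (div_pos (hkpos i) (hupos i)).ne', prod_div_distrib,
      prod_sylvester]
    exact Real.log_pos ((one_lt_div hA).2 hprod)
  obtain ⟨j, hj, hmin⟩ := exists_min_image (range (n + 1)) (fun m => ∑ i ∈ range m, c i)
    ⟨0, by simp⟩
  have hjn : j < n := by
    have h0 := hmin 0 (by simp)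
    rcases (Nat.lt_succ_iff.1 (mem_range.1 hj)).lt_or_eq with h | h
    · exact h
    · subst h
      simp only [range_zero, sum_empty] at h0
      linarith
  obtain ⟨d, rfl⟩ := Nat.exists_eq_add_of_le hjn.le
  have htail := abel_nonneg (fun i => (1 : ℝ) / k (j + i)) (fun i => c (j + i))
    (fun i => by positivity)
    (fun a b hab => one_div_le_one_div_of_le (hkpos _)
      (by exact_mod_cast hmono (by omega))) d (by
      intro m hm
      have h := hmin (j + m) (by simp; omega)
      simp only [sum_range_add] at h
      linarith)
  have hterm : ∀ i, (1 : ℝ) / k i * c i ≤ 1 / ((aseq i : ℝ) + 1) - 1 / k i := by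
    intro i
    have h := Real.log_le_sub_one_of_pos (div_pos (hkpos i) (hupos i))
    have h' := mul_le_mul_of_nonneg_left h (one_div_pos.2 (hkpos i)).le
    refine h'.trans (le_of_eq ?_)
    have := (hkpos i).ne'
    have := (hupos i).ne'
    field_simp
  have htail' := htail.trans (sum_le_sum fun i _ => hterm (j + i))
  rw [sum_sub_distrib] at htail'
  have hhead := ih j (by omega) (lt_of_le_of_lt
    (sum_le_sum_of_subset_of_nonneg (range_subset_range.2 (by omega))
      fun i _ _ => by positivity) hs)
  rw [sum_range_add, sum_range_add] at hcon
  linarith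

lemma sylvester_nat (k : ℕ → ℕ) (hk : ∀ i, 2 ≤ k i) (hmono : Monotone k) (n : ℕ)
    (hs : ∑ i ∈ range n, (1 : ℝ) / k i < 1) :
    ∑ i ∈ range n, (1 : ℝ) / ((k i : ℝ) - 1) ≤ ∑ i ∈ range n, (1 : ℝ) / (aseq i : ℝ) := by
  have hk2 : ∀ i, (2 : ℝ) ≤ k i := fun i => by exact_mod_cast hk i
  -- The weight `(k / (k - 1))²` is the derivative of `x / (1 - x)` at `x = 1/k`.
  have h := abel_nonneg (fun i => (1 + 1 / ((k i : ℝ) - 1)) ^ 2)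
    (fun i => 1 / ((aseq i : ℝ) + 1) - 1 / k i) (fun i => by positivity) (by
      intro a b hab
      have h1 : (k a : ℝ) ≤ k b := by exact_mod_cast hmono hab
      have h2 := hk2 a
      have h3 : 1 / ((k b : ℝ) - 1) ≤ 1 / ((k a : ℝ) - 1) :=
        one_div_le_one_div_of_le (by linarith) (by linarith)
      have h4 : 0 ≤ 1 / ((k b : ℝ) - 1) := one_div_nonneg.2 (by linarith)
      exact pow_le_pow_left₀ (by linarith) (by linarith) 2) n (by
      intro m hm
      rw [sum_sub_distrib, sub_nonneg]
      exact curtiss k hk hmono m (lt_of_le_of_lt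
        (sum_le_sum_of_subset_of_nonneg (range_subset_range.2 hm)
          fun i _ _ => by positivity) hs))
  rw [← sub_nonneg, ← sum_sub_distrib]
  refine h.trans (sum_le_sum fun i _ => ?_)
  have ha : (0 : ℝ) < aseq i := by exact_mod_cast aseq_pos i
  have hb : (0 : ℝ) < (k i : ℝ) - 1 := by linarith [hk2 i]
  -- With `a = aseq i` and `k = b + 1`, the difference of the sides is `(a - b)² / (a b² (a + 1))`.
  generalize (aseq i : ℝ) = a at *
  obtain ⟨b, hkb⟩ : ∃ b : ℝ, (k i : ℝ) = b + 1 := ⟨k i - 1, by ring⟩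
  rw [hkb] at hb ⊢
  rw [add_sub_cancel_right] at hb ⊢
  have hid : 1 / a - 1 / b - (1 + 1 / b) ^ 2 * (1 / (a + 1) - 1 / (b + 1))
      = (a - b) ^ 2 / (a * b ^ 2 * (a + 1)) := by
    field_simp
    ring
  have : 0 ≤ (a - b) ^ 2 / (a * b ^ 2 * (a + 1)) := by positivity
  linarith

/-- if 2 ≤ k_1 ≤ … ≤ k_n are integers with ∑ 1/k_i < 1, then
∑ 1/(k_i − 1) ≤ s_n = ∑_{i=1}^n 1/a_i. -/
theorem sylvester_lemma (n : ℕ) (k : Fin n → ℕ) (hk2 : ∀ i, 2 ≤ k i)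
    (hmono : Monotone k)
    (hsum : ∑ i, (1 : ℝ) / (k i : ℝ) < 1) :
    ∑ i, (1 : ℝ) / ((k i : ℝ) - 1) ≤ ∑ i : Fin n, (1 : ℝ) / (aseq i.val : ℝ) := by
  rcases n with _ | n
  · simp
  -- Extend `k` to `ℕ` by its last value, which keeps it monotone.
  set K : ℕ → ℕ := fun i => k ⟨min i n, by omega⟩ with hK
  have hKk : ∀ i : Fin (n + 1), K i = k i := fun i => by
    simp only [hK]
    congr 1
    ext
    simp only
    omega
  have h := sylvester_nat K (fun i => hk2 _)
    (fun a b hab => hmono (by simp only [Fin.mk_le_mk]; omega)) (n + 1) (by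
      rw [← Fin.sum_univ_eq_sum_range (fun i => (1 : ℝ) / K i)]
      simpa only [hKk] using hsum)
  rw [← Fin.sum_univ_eq_sum_range (fun i => (1 : ℝ) / ((K i : ℝ) - 1)),
    ← Fin.sum_univ_eq_sum_range (fun i => (1 : ℝ) / (aseq i : ℝ))] at h
  simpa only [hKk] using h
end
end

section
/- Let γ = ∑_{i=1}^∞ 1/a_i (this series converges, with γ ≈ 1.69103). For every number of agents n, every set of goods M = {1,…,m}, every additive valuations v_1,…,v_n over goods on M, and every entitlements b_1,…,b_n > 0 with ∑_i b_i = 1, there exists a finitely supported probability distribution over allocations of M such that for every agent i the expected value of her bundle satisfies E[v_i(S_i)] ≥ (1/γ)·b̂_i·v_i(M). In other words, the ex-ante share (1/γ)·PS-hat, defined by (v,b) ↦ (1/γ)·b̂·v(M), is feasible ex-ante for additive valuations over goods and arbitrary entitlements. -/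
/-!
Write `k i = ⌊1 / b i⌋`. The allocation hands all items to a single agent, chosen to be `i` with
probability proportional to `1 / k i`; agent `i` then expects `(1 / k i) / (∑ l, 1 / k l)` times
the total value, so it suffices that `∑ l, 1 / k l ≤ γ`.

Since `b i > 1 / (k i + 1)`, the entitlements give `∑ 1 / (k i + 1) < 1`, and the bound on
`∑ 1 / k i` is a greedy (Sylvester-type) argument, `sum_inv_le_gamma_sub`. If
`∑ 1 / (k i + 1) < 1 / a_r`, then every `k i ≥ a_r`. If some `k i = a_r`, removing it leaves the
sum below `1 / a_r - 1 / (a_r + 1) = 1 / a_{r+1}`, and induction applies. Otherwise every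
`k i ≥ a_r + 1`, so each `1 / k i` is at most `(a_r + 2) / (a_r + 1)` times `1 / (k i + 1)`, and
`∑ 1 / k i ≤ 1 / a_r + 1 / a_{r+1}`, which is part of the tail of the series `γ`.
-/

open Finset

noncomputable section

/-- γ = ∑_{i=1}^∞ 1/a_i ≈ 1.69103. -/
def gammaConst : ℝ := ∑' i : ℕ, (1 : ℝ) / (aseq i : ℝ)

lemma two_pow_le_aseq (r : ℕ) : 2 ^ r ≤ aseq r := by
  induction r with
  | zero => simp [aseq]
  | succ r ih =>
    have h1 : 1 ≤ aseq r := le_trans Nat.one_le_two_pow ih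
    rw [aseq, pow_succ]
    exact Nat.mul_le_mul ih (by omega)

lemma summable_inv_aseq : Summable fun i : ℕ => (1 : ℝ) / (aseq i : ℝ) := by
  refine Summable.of_nonneg_of_le (fun i => by positivity) (fun i => ?_) summable_geometric_two
  rw [div_pow, one_pow]
  exact one_div_le_one_div_of_le (by positivity) (by exact_mod_cast two_pow_le_aseq i)

lemma partial_sum_le_gamma (r : ℕ) :
    ∑ i ∈ range r, (1 : ℝ) / (aseq i : ℝ) ≤ gammaConst :=
  summable_inv_aseq.sum_le_tsum _ (fun i _ => by positivity)

/-- If `∑ 1 / (k i + 1) < 1 / a_r`, then `∑ 1 / k i` is at most the tail of `γ` from index `r`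
on. Indices start at `0`, as in `aseq`; the tail is written as `γ` minus a partial sum. -/
lemma sum_inv_le_gamma_sub {ι : Type*} [DecidableEq ι] (k : ι → ℕ) (s : Finset ι) :
    ∀ r : ℕ, ∑ i ∈ s, (1 : ℝ) / (k i + 1) < 1 / (aseq r : ℝ) →
      ∑ i ∈ s, (1 : ℝ) / (k i) ≤ gammaConst - ∑ i ∈ range r, (1 : ℝ) / (aseq i : ℝ) := by
  induction s using Finset.strongInduction with
  | H s ih =>
    intro r hr
    have ha : (0 : ℝ) < aseq r := by
      exact_mod_cast lt_of_lt_of_le (by positivity) (two_pow_le_aseq r)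
    have hsucc : (aseq (r + 1) : ℝ) = aseq r * (aseq r + 1) := by
      rw [aseq]; push_cast; ring
    by_cases hex : ∃ i ∈ s, k i = aseq r
    · obtain ⟨i, hi, hk⟩ := hex
      have h1 := Finset.add_sum_erase s (fun i => (1 : ℝ) / (k i + 1)) hi
      have h2 := Finset.add_sum_erase s (fun i => (1 : ℝ) / (k i)) hi
      simp only [hk] at h1 h2
      have h3 : (1 : ℝ) / aseq r - 1 / (aseq r + 1) = 1 / (aseq (r + 1) : ℝ) := by
        rw [hsucc]; field_simp; ring
      have h4 := ih (s.erase i) (Finset.erase_ssubset hi) (r + 1) (by linarith)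
      rw [Finset.sum_range_succ] at h4
      linarith
    · push Not at hex
      have hge : ∀ i ∈ s, aseq r + 1 ≤ k i := by
        intro i hi
        have h1 : (1 : ℝ) / (k i + 1) ≤ ∑ i ∈ s, (1 : ℝ) / (k i + 1) :=
          Finset.single_le_sum (f := fun i => (1 : ℝ) / (k i + 1))
            (fun j _ => by positivity) hi
        have h2 : (aseq r : ℝ) < k i + 1 :=
          lt_of_one_div_lt_one_div (by positivity) (lt_of_le_of_lt h1 hr)
        have h3 : aseq r < k i + 1 := by exact_mod_cast h2
        have h4 := hex i hi
        omega
      have hterm : ∀ i ∈ s,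
          (1 : ℝ) / (k i) ≤ ((aseq r + 2) / (aseq r + 1)) * (1 / (k i + 1)) := by
        intro i hi
        have h1 : (aseq r : ℝ) + 1 ≤ k i := by exact_mod_cast hge i hi
        have h2 : (0 : ℝ) < k i := by linarith
        rw [div_mul_div_comm, div_le_div_iff₀ h2 (by positivity)]
        nlinarith
      have h1 := Finset.sum_le_sum hterm
      rw [← Finset.mul_sum] at h1
      have h2 : ((aseq r + 2 : ℝ) / (aseq r + 1)) * ∑ i ∈ s, (1 : ℝ) / (k i + 1) ≤
          ((aseq r + 2 : ℝ) / (aseq r + 1)) * (1 / aseq r) :=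
        mul_le_mul_of_nonneg_left hr.le (by positivity)
      have h3 : ((aseq r + 2 : ℝ) / (aseq r + 1)) * (1 / aseq r) =
          1 / aseq r + 1 / (aseq (r + 1) : ℝ) := by
        rw [hsucc]; field_simp; ring
      have h4 := partial_sum_le_gamma (r + 2)
      rw [Finset.sum_range_succ, Finset.sum_range_succ] at h4
      linarith

/-- The allocation giving all items to agent `l`. -/
def dictator (n m : ℕ) (l : Fin n) : Fin n → Finset (Fin m) :=
  fun i => if i = l then Finset.univ else ∅

lemma isPartition_dictator {n m : ℕ} (l : Fin n) : IsPartition (dictator n m l) := by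
  refine ⟨fun i j hij => ?_, fun e => ⟨l, by simp [dictator]⟩⟩
  by_cases hi : i = l
  · have hj : j ≠ l := fun h => hij (hi.trans h.symm)
    simp [dictator, hj]
  · simp [dictator, hi]

/-- the ex-ante share (1/γ)·PS-hat, given by (v,b) ↦ (1/γ)·b̂·v(M) with
b̂ = 1/⌊1/b⌋, is feasible ex-ante for additive valuations over goods and arbitrary
entitlements: some finitely supported distribution over allocations gives every agent i
expected value at least (1/γ)·b̂_i·v_i(M). -/
theorem inv_gamma_PShat_exante_feasible (n m : ℕ) (v : Fin n → Fin m → ℝ)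
    (hv : ∀ i j, 0 ≤ v i j)
    (b : Fin n → ℝ) (hb : ∀ i, 0 < b i) (hsum : ∑ i, b i = 1) :
    ∃ p : (Fin n → Finset (Fin m)) → ℝ,
      (∀ A, 0 ≤ p A) ∧ (∑ A : Fin n → Finset (Fin m), p A = 1) ∧
      (∀ A, p A ≠ 0 → IsPartition A) ∧
      ∀ i, gammaConst⁻¹ * ((⌊1 / b i⌋₊ : ℝ))⁻¹ * bundleVal (v i) Finset.univ ≤
        ∑ A : Fin n → Finset (Fin m), p A * bundleVal (v i) (A i) := by
  classical
  have hpos : ∀ i, 0 < ⌊1 / b i⌋₊ := by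
    intro i
    have h1 : b i ≤ 1 := hsum ▸ Finset.single_le_sum (fun j _ => (hb j).le) (Finset.mem_univ i)
    exact Nat.floor_pos.mpr ((one_le_div (hb i)).mpr h1)
  have hne : (Finset.univ : Finset (Fin n)).Nonempty := by
    rw [Finset.nonempty_iff_ne_empty]
    intro h
    simp [h] at hsum
  have hlt : ∑ i, (1 : ℝ) / ((⌊1 / b i⌋₊ : ℝ) + 1) < 1 / (aseq 0 : ℝ) := by
    have h0 : (1 : ℝ) / (aseq 0 : ℝ) = ∑ i, b i := by simp [aseq, hsum]
    rw [h0]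
    refine Finset.sum_lt_sum_of_nonempty hne fun i _ => ?_
    rw [one_div_lt (by positivity) (hb i)]
    exact Nat.lt_floor_add_one _
  have hle := sum_inv_le_gamma_sub (fun i => ⌊1 / b i⌋₊) Finset.univ 0 hlt
  simp only [Finset.range_zero, Finset.sum_empty, sub_zero, one_div (Nat.cast _ : ℝ)] at hle
  have hSpos : 0 < ∑ i, ((⌊1 / b i⌋₊ : ℝ))⁻¹ :=
    Finset.sum_pos (fun i _ => inv_pos.mpr (by exact_mod_cast hpos i)) hne
  set S : ℝ := ∑ i, ((⌊1 / b i⌋₊ : ℝ))⁻¹ with hS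
  set q : Fin n → ℝ := fun i => S⁻¹ * ((⌊1 / b i⌋₊ : ℝ))⁻¹ with hq
  have hq0 : ∀ i, 0 ≤ q i := fun i => by positivity
  -- Integration against the lottery that picks `dictator n m l` with probability `q l`.
  have hint : ∀ f : (Fin n → Finset (Fin m)) → ℝ,
      ∑ A, (∑ l, if A = dictator n m l then q l else 0) * f A =
        ∑ l, q l * f (dictator n m l) := by
    intro f
    simp only [Finset.sum_mul]
    rw [Finset.sum_comm]
    simp [ite_mul]
  refine ⟨fun A => ∑ l, if A = dictator n m l then q l else 0, fun A => ?_, ?_, ?_, ?_⟩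
  · exact Finset.sum_nonneg fun l _ => by split_ifs <;> simp [hq0]
  · have h := hint fun _ => 1
    simp only [mul_one] at h
    rw [h, hq, ← Finset.mul_sum, ← hS, inv_mul_cancel₀ hSpos.ne']
  · intro A hA
    obtain ⟨l, _, hl⟩ := Finset.exists_ne_zero_of_sum_ne_zero hA
    have hAl : A = dictator n m l := by
      by_contra h
      simp [h] at hl
    exact hAl ▸ isPartition_dictator l
  · intro i
    rw [hint fun A => bundleVal (v i) (A i)]
    have hval : 0 ≤ bundleVal (v i) Finset.univ := Finset.sum_nonneg fun j _ => hv i j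
    have hterm : ∑ l, q l * bundleVal (v i) (dictator n m l i) =
        q i * bundleVal (v i) Finset.univ := by
      rw [Finset.sum_eq_single i]
      · simp [dictator]
      · intro l _ hl
        simp [dictator, bundleVal, hl.symm]
      · simp
    rw [hterm]
    refine mul_le_mul_of_nonneg_right ?_ hval
    exact mul_le_mul_of_nonneg_right (inv_anti₀ hSpos hle) (by positivity)
end
end

section
/- For every n ≥ 2 and every m with 1 ≤ m < n, there exist entitlements b_1,…,b_n > 0 with ∑_i b_i = 1 satisfying 1/(m+1) < b_i < 1/m for every i ≤ m and 0 < b_i ≤ 1/(m+1) for every i > m, such that for the additive valuation v over goods on M = {1,…,m} giving each item value 1 (all n agents having this same valuation v), the following best-of-both-worlds impossibility holds: MMS(v, b̂_i) = 1 for every i ≤ m, and for every finitely supported probability distribution D over allocations of M, if every allocation in the support of D gives each agent i ≤ m a bundle of positive value (as is required to obtain any positive fraction of MMS(v, b̂_i) ex-post), then every allocation in the support gives each agent j > m value 0, so some agent j > m has expected value 0 even though her proportional share b_j·v(M) is positive. Consequently no randomized allocation can simultaneously guarantee every agent a positive constant fraction of her proportional share ex-ante and a positive constant fraction of MMS(v_i,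 b̂_i) ex-post. -/
/-!
Give each of the first `m` agents `1/(m+1) + 1/(2m(m+1)) = (2m+1)/(2m(m+1))`, the midpoint of
`1/(m+1)` and `1/m`, and split the remaining `1/(2(m+1))` equally among the other `n - m` agents.
Then `1/b_i` lies strictly between `m` and `m+1`, so the relevant maximin share is the one for `m`
bundles of `m` unit goods, which is `1` (`MMSg_unit`): singletons attain it, and averaging the
bundle values bounds it.

If the first `m` agents all receive nonempty bundles, choosing one item from each gives an
injection `Fin m → Fin m` by disjointness, hence a surjection; these agents therefore hold all
items and every later bundle is empty (`later_bundle_empty`).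
-/


open Finset

noncomputable section

lemma bundleVal_unit {m : ℕ} {v : Fin m → ℝ} (hv : ∀ j, v j = 1) (S : Finset (Fin m)) :
    bundleVal v S = (S.card : ℝ) := by
  simp [bundleVal, hv]

lemma MMSg_unit {m : ℕ} (hm : 1 ≤ m) {v : Fin m → ℝ} (hv : ∀ j, v j = 1) : MMSg v m = 1 := by
  have : Nonempty (Fin m) := ⟨⟨0, hm⟩⟩
  have hm0 : (0 : ℝ) < m := by exact_mod_cast hm
  have hle : ∀ P : {P : Fin m → Finset (Fin m) // IsPartition P},
      ⨅ j : Fin m, bundleVal v (P.1 j) ≤ 1 := by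
    intro P
    -- The minimum is at most the average, and disjoint bundles hold at most `m` items in total.
    have hcard : ∑ j, (P.1 j).card ≤ m := by
      rw [← Finset.card_biUnion (fun i _ j _ hij => P.2.1 i j hij)]
      simpa using Finset.card_le_univ (Finset.univ.biUnion P.1)
    have hmin : ∀ j, ⨅ j : Fin m, bundleVal v (P.1 j) ≤ ((P.1 j).card : ℝ) := fun j => by
      rw [← bundleVal_unit hv]
      exact ciInf_le (Set.finite_range _).bddBelow j
    have hsum := Finset.sum_le_sum (s := Finset.univ) fun j _ => hmin j
    have hcard' : (∑ j, ((P.1 j).card : ℝ)) ≤ m := by exact_mod_cast hcard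
    simp only [Finset.sum_const, Finset.card_univ, Fintype.card_fin, nsmul_eq_mul] at hsum
    nlinarith
  let Q : {P : Fin m → Finset (Fin m) // IsPartition P} :=
    ⟨fun j => {j}, fun i j hij => by simpa using hij, fun e => ⟨e, by simp⟩⟩
  have : Nonempty {P : Fin m → Finset (Fin m) // IsPartition P} := ⟨Q⟩
  apply le_antisymm (ciSup_le hle)
  calc (1 : ℝ) = ⨅ j : Fin m, bundleVal v (Q.1 j) := by simp [bundleVal_unit hv, Q]
    _ ≤ MMSg v m := le_ciSup (f := fun P : {P : Fin m → Finset (Fin m) // IsPartition P} =>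
        ⨅ j : Fin m, bundleVal v (P.1 j)) ⟨1, by rintro _ ⟨P, rfl⟩; exact hle P⟩ Q

lemma later_bundle_empty {n m : ℕ} (hmn : m < n) {A : Fin n → Finset (Fin m)}
    (hA : IsPartition A) (hne : ∀ i : Fin n, (i : ℕ) < m → (A i).Nonempty)
    {i : Fin n} (hi : m ≤ (i : ℕ)) : A i = ∅ := by
  choose f hf using fun k : Fin m => hne (Fin.castLE hmn.le k) k.2
  have hinj : Function.Injective f := by
    intro k l hkl
    by_contra hne'
    have hd := hA.1 (Fin.castLE hmn.le k) (Fin.castLE hmn.le l)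
      (fun h => hne' (Fin.castLE_injective _ h))
    exact Finset.disjoint_left.mp hd (hf k) (hkl ▸ hf l)
  rw [Finset.eq_empty_iff_forall_notMem]
  intro e he
  obtain ⟨k, rfl⟩ := Finite.surjective_of_injective hinj e
  have hki : Fin.castLE hmn.le k ≠ i := by
    rintro rfl
    exact absurd k.2 (not_lt.mpr hi)
  exact Finset.disjoint_left.mp (hA.1 _ _ hki) (hf k) he

/-- The entitlements `b_i`: the first `m` agents get the midpoint of `1/(m+1)` and `1/m`, and the
others share the rest equally. -/
def entitlement (n m : ℕ) (i : Fin n) : ℝ :=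
  if (i : ℕ) < m then (2 * m + 1) / (2 * m * (m + 1)) else 1 / (2 * (m + 1) * (n - m))

lemma sum_entitlement {n m : ℕ} (hm : 1 ≤ m) (hmn : m < n) : ∑ i, entitlement n m i = 1 := by
  have hm0 : (m : ℝ) ≠ 0 := by positivity
  obtain ⟨k, rfl⟩ := Nat.exists_eq_add_of_lt hmn
  have hk : (k : ℝ) + 1 ≠ 0 := by positivity
  rw [show m + k + 1 = m + (k + 1) from rfl, Fin.sum_univ_add]
  simp only [entitlement, Fin.val_castAdd, Fin.is_lt, if_true, Fin.val_natAdd,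
    not_lt.mpr (Nat.le_add_right m _), if_false, Finset.sum_const, Finset.card_univ,
    Fintype.card_fin, nsmul_eq_mul]
  push_cast
  rw [add_sub_cancel_left]
  field_simp
  ring

/-- best-of-both-worlds impossibility for goods. For n ≥ 2 agents and
1 ≤ m < n identical goods of value 1, there are entitlements (the first m agents having
1/(m+1) < b_i < 1/m and the rest having 0 < b_i ≤ 1/(m+1)) such that MMS(v, b̂_i) = 1 for
each of the first m agents, and any randomized allocation whose support gives each of the
first m agents positive value must give every later agent value 0 in every allocation of
the support; hence some later agent gets expected value 0 although her proportional share
b_j·v(M) is positive. -/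
theorem BoBW_goods_impossible (n m : ℕ) (hn : 2 ≤ n) (hm : 1 ≤ m) (hmn : m < n) :
    ∃ b : Fin n → ℝ, (∀ i, 0 < b i) ∧ (∑ i, b i = 1) ∧
      (∀ i : Fin n, (i : ℕ) < m → 1 / ((m : ℝ) + 1) < b i ∧ b i < 1 / (m : ℝ)) ∧
      (∀ i : Fin n, m ≤ (i : ℕ) → b i ≤ 1 / ((m : ℝ) + 1)) ∧
      ∀ v : Fin m → ℝ, (∀ j, v j = 1) →
        (∀ i : Fin n, (i : ℕ) < m → MMSg v ⌊1 / b i⌋₊ = 1) ∧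
        ∀ p : (Fin n → Finset (Fin m)) → ℝ,
          (∀ A, 0 ≤ p A) → (∑ A : Fin n → Finset (Fin m), p A = 1) →
          (∀ A, p A ≠ 0 → IsPartition A) →
          (∀ A, p A ≠ 0 → ∀ i : Fin n, (i : ℕ) < m → 0 < bundleVal v (A i)) →
          (∀ A, p A ≠ 0 → ∀ i : Fin n, m ≤ (i : ℕ) → bundleVal v (A i) = 0) ∧
          ∃ j : Fin n, m ≤ (j : ℕ) ∧
            (∑ A : Fin n → Finset (Fin m), p A * bundleVal v (A j)) = 0 ∧
            0 < b j * bundleVal v Finset.univ := by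
  have hm1 : (1 : ℝ) ≤ m := by exact_mod_cast hm
  have hm0 : (0 : ℝ) < m := by linarith
  have hnm : (1 : ℝ) ≤ n - m := by
    have : (m : ℝ) + 1 ≤ n := by exact_mod_cast hmn
    linarith
  have hnm0 : (0 : ℝ) < n - m := by linarith
  have hpos : ∀ i, 0 < entitlement n m i := by
    intro i
    unfold entitlement
    split_ifs <;> positivity
  have hbig : ∀ i : Fin n, (i : ℕ) < m →
      1 / ((m : ℝ) + 1) < entitlement n m i ∧ entitlement n m i < 1 / (m : ℝ) := by
    intro i hi
    simp only [entitlement, hi, if_true]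
    constructor
    · rw [div_lt_div_iff₀ (by positivity) (by positivity)]
      nlinarith
    · rw [div_lt_div_iff₀ (by positivity) (by positivity)]
      nlinarith
  refine ⟨entitlement n m, hpos, sum_entitlement hm hmn, hbig, ?_, ?_⟩
  · intro i hi
    simp only [entitlement, not_lt.mpr hi, if_false]
    apply one_div_le_one_div_of_le (by positivity)
    nlinarith
  intro v hv
  constructor
  · intro i hi
    have hfloor : ⌊1 / entitlement n m i⌋₊ = m := by
      obtain ⟨h1, h2⟩ := hbig i hi
      rw [Nat.floor_eq_iff (one_div_pos.mpr (hpos i)).le]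
      constructor
      · exact (le_one_div hm0 (hpos i)).mpr h2.le
      · exact (one_div_lt (hpos i) (by positivity)).mpr h1
    rw [hfloor]
    exact MMSg_unit hm hv
  intro p _ _ hpart hval
  have hzero : ∀ A, p A ≠ 0 → ∀ i : Fin n, m ≤ (i : ℕ) → bundleVal v (A i) = 0 := by
    intro A hA i hi
    rw [later_bundle_empty hmn (hpart A hA) _ hi]
    · simp [bundleVal]
    · intro k hk
      have := hval A hA k hk
      rw [bundleVal_unit hv] at this
      exact Finset.card_pos.mp (by exact_mod_cast this)
  refine ⟨hzero, ⟨m, hmn⟩, le_rfl, ?_, ?_⟩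
  · apply Finset.sum_eq_zero
    intro A _
    by_cases hA : p A = 0
    · simp [hA]
    · rw [hzero A hA ⟨m, hmn⟩ le_rfl, mul_zero]
  · apply mul_pos (hpos _)
    simpa [bundleVal_unit hv] using Nat.pos_of_ne_zero (by omega : m ≠ 0)
end
end

section
/- For every real b with 0 < b < 1, the unit lower bound satisfies b/2 < b̌ ≤ b. Consequently, for every responsibilities b_1,…,b_n with 0 < b_i < 1 and ∑_{i=1}^n b_i = 1, one has ∑_{i=1}^n b̌_i > 1/2. This lower bound is tight: for every ε with 0 < ε < 1/2 there exist responsibilities with b_1 = 1 − ε (and the remaining responsibilities positive and summing to ε) for which ∑_{i=1}^n b̌_i < 1/2 + ε. -/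
/-!
The estimate `b/2 < b̌ ≤ b` comes from `1/b ≤ ⌈1/b⌉ < 1/b + 1 < 2/b`, and summing its left half
over the responsibilities gives the bound `1/2`. For tightness, the responsibility `1 - ε > 1/2`
has unit lower bound exactly `1/2`. The remaining mass cannot always be a single responsibility
`ε`, since `ε̌ = ε` when `1/ε` is an integer; it is split as `x + (ε - x)` with `x` irrational,
for which `x̌ < x` strictly.
-/

open Finset

noncomputable section

theorem unit_lower_bound_bounds (b : ℝ) (h0 : 0 < b) (h1 : b < 1) :
    b / 2 < ((⌈1 / b⌉₊ : ℝ))⁻¹ ∧ ((⌈1 / b⌉₊ : ℝ))⁻¹ ≤ b := by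
  have hb : 1 < 1 / b := by rwa [lt_div_iff₀ h0, one_mul]
  have hle := Nat.le_ceil (1 / b)
  have hlt := Nat.ceil_lt_add_one (a := 1 / b) (by positivity)
  have hc : (0 : ℝ) < (⌈1 / b⌉₊ : ℝ) := by linarith
  constructor
  · rw [lt_inv_comm₀ (by positivity) hc]
    have h2 : (b / 2)⁻¹ = 1 / b + 1 / b := by field_simp; norm_num
    linarith
  · rw [inv_le_comm₀ hc h0, ← one_div]
    exact hle

/-- (i) for 0 < b < 1 the unit lower bound b̌ = 1/⌈1/b⌉ satisfies
b/2 < b̌ ≤ b; (ii) consequently for responsibilities b_1,…,b_n ∈ (0,1) summing to 1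
one has ∑ b̌_i > 1/2; and (iii) this is tight: for every 0 < ε < 1/2 there are
responsibilities with b_1 = 1 − ε (the rest positive and summing to ε) for which
∑ b̌_i < 1/2 + ε. -/
theorem unit_lower_bound_properties :
    (∀ b : ℝ, 0 < b → b < 1 →
      b / 2 < ((⌈1 / b⌉₊ : ℝ))⁻¹ ∧ ((⌈1 / b⌉₊ : ℝ))⁻¹ ≤ b) ∧
    (∀ (n : ℕ) (b : Fin n → ℝ), (∀ i, 0 < b i ∧ b i < 1) → (∑ i, b i = 1) →
      1 / 2 < ∑ i, ((⌈1 / b i⌉₊ : ℝ))⁻¹) ∧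
    (∀ ε : ℝ, 0 < ε → ε < 1 / 2 →
      ∃ (n : ℕ) (b : Fin n → ℝ), (∀ i, 0 < b i ∧ b i < 1) ∧ (∑ i, b i = 1) ∧
        (∃ i₀ : Fin n, b i₀ = 1 - ε ∧ ∑ i ∈ Finset.univ.erase i₀, b i = ε) ∧
        ∑ i, ((⌈1 / b i⌉₊ : ℝ))⁻¹ < 1 / 2 + ε) := by
  refine ⟨unit_lower_bound_bounds, ?_, ?_⟩
  · intro n b hb hsum
    have hne : (Finset.univ : Finset (Fin n)).Nonempty := by
      rw [Finset.nonempty_iff_ne_empty]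
      intro h
      rw [h] at hsum
      simp at hsum
    calc (1 / 2 : ℝ) = ∑ i, b i / 2 := by rw [← Finset.sum_div, hsum]
      _ < _ := Finset.sum_lt_sum_of_nonempty hne fun i _ =>
        (unit_lower_bound_bounds (b i) (hb i).1 (hb i).2).1
  · intro ε h0 h1
    obtain ⟨x, hx, hx0, hxε⟩ := exists_irrational_btwn h0
    have hxlt : ((⌈1 / x⌉₊ : ℝ))⁻¹ < x := by
      refine lt_of_le_of_ne (unit_lower_bound_bounds x hx0 (by linarith)).2 fun h => ?_
      exact hx ⟨((⌈1 / x⌉₊ : ℚ))⁻¹, by push_cast; exact h⟩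
    have hy := (unit_lower_bound_bounds (ε - x) (by linarith) (by linarith)).2
    have hc : ⌈1 / (1 - ε)⌉₊ = 2 := by
      have hp : 0 < 1 - ε := by linarith
      rw [Nat.ceil_eq_iff (by norm_num)]
      constructor
      · rw [lt_div_iff₀ hp]; push_cast; linarith
      · rw [div_le_iff₀ hp]; push_cast; linarith
    refine ⟨3, ![1 - ε, x, ε - x], ?_, ?_, ⟨0, rfl, ?_⟩, ?_⟩
    · intro i
      fin_cases i <;> simp <;> constructor <;> linarith
    · simp [Fin.sum_univ_three]
    · have he : (Finset.univ.erase 0 : Finset (Fin 3)) = {1, 2} := by decide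
      rw [he, Finset.sum_pair (by decide)]
      simp
    · rw [Fin.sum_univ_three]
      change ((⌈1 / (1 - ε)⌉₊ : ℝ))⁻¹ + ((⌈1 / x⌉₊ : ℝ))⁻¹ + ((⌈1 / (ε - x)⌉₊ : ℝ))⁻¹ < _
      rw [hc]
      norm_num at hxlt hy ⊢
      linarith
end
end

section
/- Let v be any monotone non-decreasing valuation over goods on M = {1,…,m} with v(∅) = 0, let b ∈ (0,1], and let k = ⌊1/b⌋. For every n, every entitlements b_1,…,b_n > 0 with ∑_{j=1}^n b_j = 1, let f_j be the unique non-negative integer with f_j/(k+1) < b_j ≤ (f_j+1)/(k+1). Then ∑_{j=1}^n f_j ≤ k, and there exists an allocation (S_1,…,S_n) of M such that for every agent j, the bundle S_j contains f_j pairwise disjoint subsets each of v-value at least MMS(v, 1/k). (This establishes that the personalized MMS share associated with (v,b) is feasible ex-post for every class of monotone valuations over goods.) -/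
/-!
Multiplying `f j / (k + 1) < bb j` by `k + 1` and summing gives `∑ f j < k + 1`, so `∑ f j ≤ k`.
The maximin share is attained by a partition `P` into `k` bundles, each of value at least
`MMSgSet w k`. Since `∑ f j ≤ k`, agent `j` can be given `f j` bundles of `P` of its own, and the
leftover bundles go to an arbitrary agent; such an agent exists because the entitlements sum to `1`.
-/

open Finset

noncomputable section

/-- Maximin share `MMS(w, 1/k)` for a (set-function) valuation over goods:
the maximum over partitions into `k` bundles of the minimum bundle value. -/
def MMSgSet {m : ℕ} (w : Finset (Fin m) → ℝ) (k : ℕ) : ℝ :=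
  ⨆ P : {P : Fin k → Finset (Fin m) // IsPartition P}, ⨅ j : Fin k, w (P.1 j)

/-- For `k ≥ 1` the maximin share is attained. -/
lemma exists_partition_MMSgSet_le {m k : ℕ} (w : Finset (Fin m) → ℝ) (hk : 0 < k) :
    ∃ P : Fin k → Finset (Fin m), IsPartition P ∧ ∀ i, MMSgSet w k ≤ w (P i) := by
  have : Nonempty {P : Fin k → Finset (Fin m) // IsPartition P} := by
    -- All items are put in the bundle of index `0`.
    refine ⟨fun i => if i = ⟨0, hk⟩ then univ else ∅, ?_, fun e => ⟨⟨0, hk⟩, by simp⟩⟩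
    intro i j hij
    by_cases hi : i = ⟨0, hk⟩
    · have hj : j ≠ ⟨0, hk⟩ := fun h => hij (hi.trans h.symm)
      simp [hj]
    · simp [hi]
  obtain ⟨P, hP⟩ := exists_eq_ciSup_of_finite
    (f := fun P : {P : Fin k → Finset (Fin m) // IsPartition P} => ⨅ j : Fin k, w (P.1 j))
  refine ⟨P.1, P.2, fun i => ?_⟩
  unfold MMSgSet
  rw [← hP]
  exact ciInf_le (Set.finite_range _).bddBelow i

/-- feasibility of the personalized MMS share for goods. Let w be a
monotone valuation over goods on M with w(∅) = 0, b ∈ (0,1] and k = ⌊1/b⌋. For every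
instance with entitlements b_1,…,b_n > 0 summing to 1, with f_j the unique non-negative
integer satisfying f_j/(k+1) < b_j ≤ (f_j+1)/(k+1), we have ∑_j f_j ≤ k, and there is
an allocation in which each agent j's bundle contains f_j pairwise disjoint subsets,
each of w-value at least MMS(w, 1/k). -/
theorem personalized_MMS_goods_feasible (m : ℕ) (w : Finset (Fin m) → ℝ)
    (hw0 : w ∅ = 0) (hwmono : ∀ S T : Finset (Fin m), S ⊆ T → w S ≤ w T)
    (b : ℝ) (hb0 : 0 < b) (hb1 : b ≤ 1) (k : ℕ) (hk : k = ⌊1 / b⌋₊)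
    (n : ℕ) (bb : Fin n → ℝ) (hbb : ∀ j, 0 < bb j) (hsum : ∑ j, bb j = 1)
    (f : Fin n → ℕ)
    (hf : ∀ j, (f j : ℝ) / ((k : ℝ) + 1) < bb j ∧ bb j ≤ ((f j : ℝ) + 1) / ((k : ℝ) + 1)) :
    (∑ j, f j) ≤ k ∧
    ∃ A : Fin n → Finset (Fin m), IsPartition A ∧
      ∀ j, ∃ T : Fin (f j) → Finset (Fin m),
        (∀ t₁ t₂, t₁ ≠ t₂ → Disjoint (T t₁) (T t₂)) ∧
        (∀ t, T t ⊆ A j) ∧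
        (∀ t, MMSgSet w k ≤ w (T t)) := by
  have hk1 : 0 < k := by
    rw [hk, Nat.floor_pos, le_div_iff₀ hb0]
    linarith
  have hn : (univ : Finset (Fin n)).Nonempty := by
    by_contra h
    rw [Finset.not_nonempty_iff_eq_empty] at h
    simp [h] at hsum
  obtain ⟨j₀, -⟩ := id hn
  have hle : (∑ j, f j) ≤ k := by
    have hpos : (0 : ℝ) < (k : ℝ) + 1 := by positivity
    have h : ∑ j, (f j : ℝ) / ((k : ℝ) + 1) < ∑ j, bb j :=
      Finset.sum_lt_sum_of_nonempty hn fun j _ => (hf j).1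
    rw [← Finset.sum_div, hsum, div_lt_one hpos] at h
    have h' : (∑ j, f j) < k + 1 := by exact_mod_cast h
    omega
  refine ⟨hle, ?_⟩
  obtain ⟨P, ⟨hdisj, hcov⟩, hPw⟩ := exists_partition_MMSgSet_le w hk1
  obtain ⟨g⟩ : Nonempty ((Σ j, Fin (f j)) ↪ Fin k) := by
    apply Function.Embedding.nonempty_of_card_le
    simpa using hle
  choose idx hidx using hcov
  have hidx_eq : ∀ e i, e ∈ P i → idx e = i := by
    intro e i he
    by_contra hne
    exact Finset.disjoint_left.mp (hdisj _ _ hne) (hidx e) he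
  -- `owner i` is the agent receiving bundle `P i`; bundles outside the range of `g` go to `j₀`.
  let owner : Fin k → Fin n := Function.extend g Sigma.fst fun _ => j₀
  have howner : ∀ x, owner (g x) = x.1 := fun x => g.injective.extend_apply _ _ x
  refine ⟨fun j => univ.filter fun e => owner (idx e) = j, ⟨?_, ?_⟩, ?_⟩
  · intro i j hij
    rw [Finset.disjoint_left]
    intro e hi hj
    simp only [Finset.mem_filter, Finset.mem_univ, true_and] at hi hj
    exact hij (hi.symm.trans hj)
  · intro e
    exact ⟨owner (idx e), by simp⟩
  · intro j
    refine ⟨fun t => P (g ⟨j, t⟩), ?_, ?_, fun t => hPw _⟩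
    · intro t₁ t₂ ht
      apply hdisj
      intro h
      exact ht (by simpa using g.injective h)
    · intro t e he
      simp [hidx_eq e _ he, howner]
end
end

section
/- Let c be any monotone non-decreasing cost function on M = {1,…,m} with c(∅) = 0, let b ∈ (0,1), and let k be the integer with 1/(k+1) ≤ b < 1/k. For every n ≥ 2, every responsibilities b_1,…,b_n ∈ (0,1) with ∑_{j=1}^n b_j = 1, let f_j be the unique positive integer with (f_j−1)/k ≤ b_j < f_j/k. Then ∑_{j=1}^n f_j ≥ k+1, and there exists an assignment (S_1,…,S_n) of all of M such that for every agent j, the set S_j is the union of at most f_j subsets each of c-cost at most MMS(c, 1/(k+1)). (This establishes that the personalized MMS share associated with (c,b) is feasible ex-post for every class of monotone cost functions over chores.) -/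
/-!
Since `b_j < f_j / k` for every agent, summing gives `k < ∑ f_j`, so the disjoint union of slots
`Σ j, Fin (f j)` has at least `k + 1` elements. A partition into `k + 1` bundles attaining
`MMS(c, 1/(k+1))` exists because there are only finitely many partitions
(`exists_partition_le_MMScSet`); placing its bundles injectively into the slots, and leaving the
remaining slots empty, gives agent `j` at most `f_j` bundles, each of cost at most the share.
An empty slot costs `c ∅`, which by monotonicity is at most the cost of any bundle.
-/

open Finset

noncomputable section

/-- Maximin share `MMS(c, 1/k)` for a (set-function) cost function over chores:
the minimum over partitions into `k` bundles of the maximum bundle cost. -/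
def MMScSet {m : ℕ} (c : Finset (Fin m) → ℝ) (k : ℕ) : ℝ :=
  ⨅ P : {P : Fin k → Finset (Fin m) // IsPartition P}, ⨆ j : Fin k, c (P.1 j)

/-- The infimum defining the maximin share is attained: for `k + 1` bundles the set of partitions
is finite and nonempty. -/
lemma exists_partition_le_MMScSet {m : ℕ} (c : Finset (Fin m) → ℝ) (k : ℕ) :
    ∃ P : Fin (k + 1) → Finset (Fin m), IsPartition P ∧ ∀ i, c (P i) ≤ MMScSet c (k + 1) := by
  -- The trivial partition, with all items in bundle `0`, shows nonemptiness.
  have hne : Nonempty {P : Fin (k + 1) → Finset (Fin m) // IsPartition P} := by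
    refine ⟨⟨fun i => if i = 0 then Finset.univ else ∅, ?_, fun e => ⟨0, by simp⟩⟩⟩
    intro i j hij
    by_cases hi : i = 0
    · have hj : j ≠ 0 := fun h => hij (hi.trans h.symm)
      simp [hj]
    · simp [hi]
  obtain ⟨P, hP⟩ := exists_eq_ciInf_of_finite
    (f := fun P : {P : Fin (k + 1) → Finset (Fin m) // IsPartition P} =>
      ⨆ j : Fin (k + 1), c (P.1 j))
  refine ⟨P.1, P.2, fun i => ?_⟩
  unfold MMScSet
  rw [← hP]
  exact le_ciSup (f := fun j => c (P.1 j)) (Set.finite_range _).bddAbove i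

/-- feasibility of the personalized MMS share for chores. Let c be a
monotone cost function on M with c(∅) = 0, b ∈ (0,1), and k the integer with
1/(k+1) ≤ b < 1/k. For every instance with n ≥ 2 agents with responsibilities
b_1,…,b_n ∈ (0,1) summing to 1, with f_j the unique positive integer satisfying
(f_j−1)/k ≤ b_j < f_j/k, we have ∑_j f_j ≥ k+1, and there is an assignment of all
chores in which each agent j's set is the union of at most f_j subsets, each of
c-cost at most MMS(c, 1/(k+1)). -/
theorem personalized_MMS_chores_feasible (m : ℕ) (c : Finset (Fin m) → ℝ)
    (hc0 : c ∅ = 0) (hcmono : ∀ S T : Finset (Fin m), S ⊆ T → c S ≤ c T)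
    (b : ℝ) (k : ℕ) (hk1 : 1 ≤ k)
    (hkb : 1 / ((k : ℝ) + 1) ≤ b ∧ b < 1 / (k : ℝ))
    (n : ℕ) (hn : 2 ≤ n) (bb : Fin n → ℝ) (hbb : ∀ j, 0 < bb j ∧ bb j < 1)
    (hsum : ∑ j, bb j = 1)
    (f : Fin n → ℕ) (hfpos : ∀ j, 1 ≤ f j)
    (hf : ∀ j, ((f j : ℝ) - 1) / (k : ℝ) ≤ bb j ∧ bb j < (f j : ℝ) / (k : ℝ)) :
    k + 1 ≤ ∑ j, f j ∧
    ∃ A : Fin n → Finset (Fin m), IsPartition A ∧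
      ∀ j, ∃ T : Fin (f j) → Finset (Fin m),
        A j = Finset.univ.biUnion T ∧
        ∀ t, c (T t) ≤ MMScSet c (k + 1) := by
  have hk : (0 : ℝ) < k := by exact_mod_cast hk1
  have hcard : k + 1 ≤ ∑ j, f j := by
    have hlt : ∑ j, bb j < ∑ j, (f j : ℝ) / (k : ℝ) :=
      Finset.sum_lt_sum_of_nonempty ⟨⟨0, by omega⟩, Finset.mem_univ _⟩ fun j _ => (hf j).2
    rw [hsum, ← Finset.sum_div, lt_div_iff₀ hk, one_mul] at hlt
    exact_mod_cast hlt
  refine ⟨hcard, ?_⟩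
  obtain ⟨P, ⟨hPdisj, hPcov⟩, hPle⟩ := exists_partition_le_MMScSet c k
  obtain ⟨e⟩ : Nonempty (Fin (k + 1) ↪ (Σ j, Fin (f j))) :=
    Function.Embedding.nonempty_of_card_le (by simpa using hcard)
  -- `T x` is the bundle placed in slot `x`, or `∅` if no bundle is placed there.
  let T : (Σ j, Fin (f j)) → Finset (Fin m) := Function.extend e P fun _ => ∅
  have hTe : ∀ i, T (e i) = P i := fun i => e.injective.extend_apply P _ i
  have hTempty : ∀ x, (¬ ∃ i, e i = x) → T x = ∅ := fun x hx => Function.extend_apply' P _ x hx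
  refine ⟨fun j => Finset.univ.biUnion fun t => T ⟨j, t⟩, ⟨?_, ?_⟩,
    fun j => ⟨fun t => T ⟨j, t⟩, rfl, fun t => ?_⟩⟩
  · intro j j' hjj
    simp only [Finset.disjoint_biUnion_left, Finset.disjoint_biUnion_right]
    intro t' _ t _
    by_cases h : ∃ i, e i = ⟨j, t⟩
    · by_cases h' : ∃ i, e i = ⟨j', t'⟩
      · obtain ⟨i, hi⟩ := h
        obtain ⟨i', hi'⟩ := h'
        rw [← hi, ← hi', hTe, hTe]
        refine hPdisj i i' fun hii => hjj ?_
        subst hii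
        exact congrArg Sigma.fst (hi.symm.trans hi')
      · simp [hTempty _ h']
    · simp [hTempty _ h]
  · intro x
    obtain ⟨i, hi⟩ := hPcov x
    exact ⟨(e i).1, Finset.mem_biUnion.2 ⟨(e i).2, Finset.mem_univ _, (hTe i).symm ▸ hi⟩⟩
  · by_cases h : ∃ i, e i = ⟨j, t⟩
    · obtain ⟨i, hi⟩ := h
      simpa only [← hi, hTe] using hPle i
    · simp only [hTempty _ h]
      exact (hcmono _ _ (Finset.empty_subset (P 0))).trans (hPle 0)
end
end

section
/- Let M = {1,2,3,4} and define the valuation v over goods on M by v(S) = 1 if S = {1,2}, or S = {3,4}, or |S| ≥ 3, and v(S) = 0 otherwise; v is monotone non-decreasing with v(∅) = 0, and MMS(v, 1/2) = 1. Let C be the class of all valuations equivalent to v (i.e., all valuations of the form S ↦ v(π(S)) for a permutation π of M). Then every name-independent ex-post share s for the class C that is feasible for two agents with equal entitlements 1/2 satisfies s(v, 1/2) ≤ 0. Hence for this (non-additive) class, MMS is not dominated by any feasible name-independent ex-post share, and in particular MMS is not the minimal share dominating every feasible name-independent ex-post share. The key allocation fact is: for the valuation v' defined by v'(S) = 1 iff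 S = {1,3}, or S = {2,4}, or |S| ≥ 3 (which is equivalent to v), for every S ⊆ M at least one of v(S) = 0 or v'(M∖S) = 0 holds. -/
/-!
Bundles with fewer than two items are worth `0` to both `v` and `v'`, so in an allocation giving both
a value of `1` each would receive two items. But the two-item bundles worth `1` to `v` are the blocks
of the pairing `{0, 1}, {2, 3}`, those worth `1` to `v'` the blocks of `{0, 2}, {1, 3}`, and no block
of the first has its complement in the second. So no allocation satisfies both (`halloc`). Since `v'` is a relabelling of `v`, a name-independent share gives
them the same value, and feasibility for the pair `(v, v')` then leaves an agent whose bundle is worth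
`0`, forcing that common value to be at most `0`. The maximin share is `1`, attained at
`{0, 1}, {2, 3}`. The facts about subsets of a four-element set are checked by `decide`.
-/

open Finset

noncomputable section

/-- Two set-function valuations on `Fin 4` are equivalent if one is obtained from the
other by permuting item names: w'(S) = w(π(S)) for some permutation π. -/
def EquivVal (w w' : Finset (Fin 4) → ℝ) : Prop :=
  ∃ π : Equiv.Perm (Fin 4), ∀ S : Finset (Fin 4), w' S = w (S.image π)

/-- Membership in the class C of all valuations equivalent to `v`. -/
def InClassOf (v w : Finset (Fin 4) → ℝ) : Prop := EquivVal v w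

/-- on M = {1,2,3,4}, for the valuation v with v(S) = 1 iff S = {1,2},
S = {3,4}, or |S| ≥ 3 (else 0), and the equivalent valuation v' with v'(S) = 1 iff
S = {1,3}, S = {2,4}, or |S| ≥ 3: v is a monotone valuation over goods with
MMS(v, 1/2) = 1; v' is equivalent to v; for every bundle S at least one of v(S) = 0,
v'(M∖S) = 0 holds; and consequently every name-independent share s on the class C of
valuations equivalent to v that is feasible for two agents with equal entitlements 1/2
satisfies s(v, 1/2) ≤ 0 — so no feasible name-independent share dominates MMS on C. -/
theorem nonadditive_MMS_not_dominated
    (v v' : Finset (Fin 4) → ℝ)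
    (hv : ∀ S : Finset (Fin 4),
      v S = if S = ({0, 1} : Finset (Fin 4)) ∨ S = ({2, 3} : Finset (Fin 4)) ∨ 3 ≤ S.card
        then 1 else 0)
    (hv' : ∀ S : Finset (Fin 4),
      v' S = if S = ({0, 2} : Finset (Fin 4)) ∨ S = ({1, 3} : Finset (Fin 4)) ∨ 3 ≤ S.card
        then 1 else 0) :
    (v ∅ = 0 ∧ (∀ S T : Finset (Fin 4), S ⊆ T → v S ≤ v T) ∧ MMSgSet v 2 = 1) ∧
    EquivVal v v' ∧
    (∀ S : Finset (Fin 4), v S = 0 ∨ v' (Finset.univ \ S) = 0) ∧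
    (∀ s : (Finset (Fin 4) → ℝ) → ℝ → ℝ,
      (∀ w w' : Finset (Fin 4) → ℝ, InClassOf v w → InClassOf v w' → EquivVal w w' →
        ∀ b : ℝ, 0 < b → b ≤ 1 → s w b = s w' b) →
      (∀ w₁ w₂ : Finset (Fin 4) → ℝ, InClassOf v w₁ → InClassOf v w₂ →
        ∃ S : Finset (Fin 4),
          s w₁ (1 / 2) ≤ w₁ S ∧ s w₂ (1 / 2) ≤ w₂ (Finset.univ \ S)) →
      s v (1 / 2) ≤ 0) := by
  have hv01 : ∀ S, v S = 0 ∨ v S = 1 := fun S => by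
    rw [hv]; split_ifs <;> simp
  have hle : ∀ S, v S ≤ 1 := fun S => by
    rcases hv01 S with h | h <;> rw [h] <;> norm_num
  have hmono : ∀ S T : Finset (Fin 4), S ⊆ T → v S ≤ v T := by
    intro S T hST
    have key : ∀ S T : Finset (Fin 4), S ⊆ T →
        (S = {0, 1} ∨ S = {2, 3} ∨ 3 ≤ S.card) →
        (T = {0, 1} ∨ T = {2, 3} ∨ 3 ≤ T.card) := by decide
    by_cases h : S = {0, 1} ∨ S = {2, 3} ∨ 3 ≤ S.card
    · rw [hv S, hv T, if_pos h, if_pos (key S T hST h)]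
    · rw [hv S, if_neg h]
      rcases hv01 T with h | h <;> rw [h]
      norm_num
  -- exchanging items 1 and 2 carries {0, 2}, {1, 3} to {0, 1}, {2, 3}
  have hequiv : EquivVal v v' := by
    refine ⟨Equiv.swap 1 2, fun S => ?_⟩
    have key : ∀ S : Finset (Fin 4),
        (S = {0, 2} ∨ S = {1, 3} ∨ 3 ≤ S.card) ↔
        (S.image (Equiv.swap 1 2) = {0, 1} ∨ S.image (Equiv.swap 1 2) = {2, 3} ∨
          3 ≤ (S.image (Equiv.swap (1 : Fin 4) 2)).card) := by decide
    rw [hv, hv']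
    simp only [key S]
  have halloc : ∀ S : Finset (Fin 4), v S = 0 ∨ v' (Finset.univ \ S) = 0 := by
    intro S
    have key : ∀ S : Finset (Fin 4),
        ¬ (S = {0, 1} ∨ S = {2, 3} ∨ 3 ≤ S.card) ∨
        ¬ (univ \ S = {0, 2} ∨ univ \ S = {1, 3} ∨ 3 ≤ (univ \ S).card) := by decide
    rcases key S with h | h
    · left; rw [hv, if_neg h]
    · right; rw [hv', if_neg h]
  have hmms : MMSgSet v 2 = 1 := by
    have hub : ∀ P : {P : Fin 2 → Finset (Fin 4) // IsPartition P},
        ⨅ j : Fin 2, v (P.1 j) ≤ 1 := fun P =>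
      (ciInf_le (Set.finite_range _).bddBelow 0).trans (hle _)
    have hpart : IsPartition (![{0, 1}, {2, 3}] : Fin 2 → Finset (Fin 4)) := by
      unfold IsPartition; decide
    have : Nonempty {P : Fin 2 → Finset (Fin 4) // IsPartition P} := ⟨⟨_, hpart⟩⟩
    refine le_antisymm (ciSup_le hub) ?_
    refine le_ciSup_of_le ⟨1, Set.forall_mem_range.2 hub⟩ ⟨_, hpart⟩ (le_ciInf fun j => ?_)
    fin_cases j <;> simp [hv]
  have hrefl : InClassOf v v := ⟨Equiv.refl _, fun S => by simp⟩
  refine ⟨⟨by rw [hv, if_neg (by decide)], hmono, hmms⟩, hequiv, halloc, fun s hname hfeas => ?_⟩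
  have heq : s v (1 / 2) = s v' (1 / 2) :=
    hname v v' hrefl hequiv hequiv _ (by norm_num) (by norm_num)
  obtain ⟨S, h₁, h₂⟩ := hfeas v v' hrefl hequiv
  rcases halloc S with h | h
  · exact h₁.trans h.le
  · exact heq.le.trans (h₂.trans h.le)
end
end
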